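/- arXiv:1907.00925 — 2 statements merged into one kernel-verified Lean document; each statement's English description precedes it below -/
import Mathlib

section
/- Lappan-type normality criterion in ℂⁿ: a family 𝓕 of holomorphic functions on a domain Ω ⊆ ℂⁿ is normal on Ω if and only if for each compact set K ⊂ Ω there exist a set E = E(K) ⊆ ℂ containing at least three distinct values and a constant M = M(K) > 0 such that for all f ∈ 𝓕 and all z ∈ K with f(z) ∈ E one has f^♯(z) ≤ M. -/
open Filter Topology

abbrev Cn (n : ℕ) := EuclideanSpace ℂ (Fin n)

/-- Chordal (spherical) distance between two finite points of the Riemann sphere. -/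
noncomputable def chordal (a b : ℂ) : ℝ :=
  dist a b / (Real.sqrt (1 + ‖a‖^2) * Real.sqrt (1 + ‖b‖^2))

/-- Chordal distance between a finite point and ∞. -/
noncomputable def chordalInf (a : ℂ) : ℝ := 1 / Real.sqrt (1 + ‖a‖^2)

/-- Spherical derivative of a holomorphic function of several complex variables. -/
noncomputable def sphDeriv {E : Type} [NormedAddCommGroup E] [NormedSpace ℂ E]
    (f : E → ℂ) (z : E) : ℝ := ‖fderiv ℂ f z‖ / (1 + ‖f z‖^2)

/-- A family `F` of (holomorphic) functions is normal on `Ω`: every sequence from `F`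
has a subsequence which converges uniformly on compact subsets of `Ω` in the spherical
metric, either to a holomorphic function or to ∞. -/
def IsNormalFamily {E : Type} [NormedAddCommGroup E] [NormedSpace ℂ E]
    (Ω : Set E) (F : Set (E → ℂ)) : Prop :=
  ∀ s : ℕ → E → ℂ, (∀ j, s j ∈ F) →
    ∃ φ : ℕ → ℕ, StrictMono φ ∧
      ((∃ g : E → ℂ, DifferentiableOn ℂ g Ω ∧
          ∀ K, K ⊆ Ω → IsCompact K → ∀ ε > 0, ∃ N, ∀ j ≥ N, ∀ z ∈ K,
            chordal (s (φ j) z) (g z) < ε) ∨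
        (∀ K, K ⊆ Ω → IsCompact K → ∀ M : ℝ, ∃ N, ∀ j ≥ N, ∀ z ∈ K, M < ‖s (φ j) z‖))

section Gen
variable {E : Type} [NormedAddCommGroup E] [NormedSpace ℂ E]

/-- Short-time control of the size of a function with bounded spherical derivative. -/
lemma fence {f : E → ℂ} {S : Set E} (hS : Convex ℝ S) {z w : E} {C A : ℝ}
    (hzS : z ∈ S) (hwS : w ∈ S)
    (hd : ∀ x ∈ S, DifferentiableAt ℂ f x)
    (hb : ∀ x ∈ S, ‖fderiv ℂ f x‖ ≤ C * (1 + ‖f x‖^2))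
    (hz : ‖f z‖ ≤ A) (hA : A ≤ 2) (hC : 40 * C * ‖w - z‖ < 1) : ‖f w‖ ≤ A + 1/4 := by
  have hA0 : 0 ≤ A := (norm_nonneg _).trans hz
  have hmem : ∀ t ∈ Set.Icc (0:ℝ) 1, z + t • (w - z) ∈ S := fun t ht =>
    hS.add_smul_sub_mem hzS hwS ht
  have hder : ∀ t ∈ Set.Icc (0:ℝ) 1,
      HasDerivAt (fun t : ℝ => f (z + t • (w - z))) (fderiv ℂ f (z + t • (w - z)) (w - z)) t := by
    intro t ht
    have h1 : HasDerivAt (fun t : ℝ => z + t • (w - z)) (w - z) t := by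
      simpa using ((hasDerivAt_id t).smul_const (w - z)).const_add z
    have h2 := ((hd _ (hmem t ht)).hasFDerivAt.restrictScalars ℝ).comp_hasDerivAt t h1
    exact h2
  have key := image_norm_le_of_norm_deriv_right_lt_deriv_boundary (a := 0) (b := 1)
    (f := fun t : ℝ => f (z + t • (w - z))) (f' := fun t => fderiv ℂ f (z + t • (w - z)) (w - z))
    (B := fun t => A + t * (1/4)) (B' := fun _ => 1/4)
    (fun t ht => (hder t ht).continuousAt.continuousWithinAt)
    (fun t ht => (hder t (Set.Ico_subset_Icc_self ht)).hasDerivWithinAt)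
    (by simpa using hz)
    (fun t => by simpa using ((hasDerivAt_id t).mul_const (1/4:ℝ)).const_add A)
    (by
      intro t ht he
      have ht' := Set.Ico_subset_Icc_self ht
      have h1 := hb _ (hmem t ht')
      have h2 : ‖f (z + t • (w - z))‖ ≤ 9/4 := by rw [he]; linarith [ht'.2]
      have h3 := (fderiv ℂ f (z + t • (w - z))).le_opNorm (w - z)
      have hC0 : 0 ≤ C := by
        by_contra hneg
        push Not at hneg
        have : C * (1 + ‖f (z + t • (w - z))‖^2) < 0 := mul_neg_of_neg_of_pos hneg (by positivity)
        linarith [norm_nonneg (fderiv ℂ f (z + t • (w - z)))]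
      have h4 : 1 + ‖f (z + t • (w - z))‖^2 ≤ 8 := by
        nlinarith [norm_nonneg (f (z + t • (w - z)))]
      have h5 : ‖fderiv ℂ f (z + t • (w - z))‖ ≤ C * 8 :=
        h1.trans (mul_le_mul_of_nonneg_left h4 hC0)
      have h6 := h3.trans (mul_le_mul_of_nonneg_right h5 (norm_nonneg _))
      linarith)
  have := key (x := 1) ⟨zero_le_one, le_rfl⟩
  simpa using this

lemma lip_of_bound {f : E → ℂ} {S : Set E} (hS : Convex ℝ S) {L : ℝ}
    (hd : ∀ x ∈ S, DifferentiableAt ℂ f x) (hb : ∀ x ∈ S, ‖fderiv ℂ f x‖ ≤ L) :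
    ∀ x ∈ S, ∀ y ∈ S, ‖f x - f y‖ ≤ L * ‖x - y‖ := fun x hx y hy =>
  hS.norm_image_sub_le_of_norm_fderiv_le (𝕜 := ℂ) hd hb hy hx

lemma fderiv_inv_norm {f : E → ℂ} {x : E} (hd : DifferentiableAt ℂ f x) (h0 : f x ≠ 0) :
    ‖fderiv ℂ (fun y => (f y)⁻¹) x‖ = ‖fderiv ℂ f x‖ / ‖f x‖^2 := by
  have h1 := (hasDerivAt_inv h0).comp_hasFDerivAt x hd.hasFDerivAt
  have h2 : fderiv ℂ (fun y => (f y)⁻¹) x = (-(f x ^ 2)⁻¹) • fderiv ℂ f x := h1.fderiv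
  rw [h2, norm_smul, norm_neg, norm_inv, norm_pow]
  field_simp

/-- Equi-Lipschitz and convergence on a dense set gives locally uniform convergence. -/
lemma dense_conv {F : ℕ → E → ℂ} {U D : Set E} (hU : IsOpen U) {L : ℝ}
    (hL : ∀ᶠ j in atTop, ∀ x ∈ U, ∀ y ∈ U, ‖F j x - F j y‖ ≤ L * ‖x - y‖)
    (hD : U ⊆ closure D) (hc : ∀ d ∈ D, d ∈ U → CauchySeq (fun j => F j d)) :
    ∃ v : E → ℂ, TendstoLocallyUniformlyOn F v atTop U := by
  have key : ∀ x ∈ U, ∀ ε > 0, ∃ δ > 0, ∃ N, ∀ j ≥ N, ∀ k ≥ N, ∀ y ∈ U, ‖y - x‖ < δ →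
      ‖F j y - F k y‖ ≤ ε := by
    intro x hx ε hε
    obtain ⟨r, hr, hrU⟩ := Metric.isOpen_iff.1 hU x hx
    set δ := min r (ε / (8 * (|L| + 1))) with hδ
    have hδ0 : 0 < δ := by positivity
    obtain ⟨d, hdD, hdx⟩ := Metric.mem_closure_iff.1 (hD hx) δ hδ0
    have hdU : d ∈ U := hrU (by
      rw [Metric.mem_ball, dist_comm]; exact hdx.trans_le (min_le_left _ _))
    obtain ⟨N1, hN1⟩ := Metric.cauchySeq_iff.1 (hc d hdD hdU) (ε/2) (by positivity)
    obtain ⟨N2, hN2⟩ := eventually_atTop.1 hL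
    refine ⟨δ, hδ0, max N1 N2, fun j hj k hk y hy hyx => ?_⟩
    have hyd : ‖y - d‖ ≤ 2 * δ := by
      have : y - d = (y - x) + (x - d) := by abel
      rw [this]
      refine (norm_add_le _ _).trans ?_
      rw [dist_eq_norm] at hdx
      linarith
    have hLδ : L * ‖y - d‖ ≤ ε / 4 := by
      have h1 : L * ‖y - d‖ ≤ (|L| + 1) * (2 * δ) := by
        apply mul_le_mul _ hyd (norm_nonneg _) (by positivity)
        linarith [le_abs_self L]
      have h2 : δ ≤ ε / (8 * (|L| + 1)) := min_le_right _ _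
      have h3 : (|L| + 1) * (2 * δ) ≤ (|L| + 1) * (2 * (ε / (8 * (|L| + 1)))) := by gcongr
      have h4 : (|L| + 1) * (2 * (ε / (8 * (|L| + 1)))) = ε / 4 := by field_simp; norm_num
      linarith
    have a1 := hN2 j (le_of_max_le_right hj) y hy d hdU
    have a2 := hN2 k (le_of_max_le_right hk) y hy d hdU
    have a3 := hN1 j (le_of_max_le_left hj) k (le_of_max_le_left hk)
    rw [dist_eq_norm] at a3
    have : F j y - F k y = (F j y - F j d) + (F j d - F k d) - (F k y - F k d) := by ring
    rw [this]
    refine (norm_sub_le _ _).trans ?_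
    have := norm_add_le (F j y - F j d) (F j d - F k d)
    linarith
  have hlim : ∀ x ∈ U, ∃ l, Tendsto (fun j => F j x) atTop (𝓝 l) := by
    intro x hx
    apply cauchySeq_tendsto_of_complete
    rw [Metric.cauchySeq_iff]
    intro ε hε
    obtain ⟨δ, hδ, N, hN⟩ := key x hx (ε/2) (by positivity)
    refine ⟨N, fun j hj k hk => ?_⟩
    rw [dist_eq_norm]
    have := hN j hj k hk x hx (by simpa using hδ)
    linarith
  choose! v hv using hlim
  refine ⟨v, ?_⟩
  rw [Metric.tendstoLocallyUniformlyOn_iff]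
  intro ε hε x hx
  obtain ⟨δ, hδ, N, hN⟩ := key x hx (ε/2) (by positivity)
  refine ⟨U ∩ Metric.ball x δ, inter_mem self_mem_nhdsWithin
    (mem_nhdsWithin_of_mem_nhds (Metric.ball_mem_nhds x hδ)), ?_⟩
  filter_upwards [eventually_ge_atTop N] with j hj y hy
  have h1 : Tendsto (fun k => ‖F j y - F k y‖) atTop (𝓝 ‖F j y - v y‖) :=
    (tendsto_const_nhds.sub (hv y hy.1)).norm
  have h2 : ‖F j y - v y‖ ≤ ε/2 := by
    refine le_of_tendsto h1 ?_
    filter_upwards [eventually_ge_atTop N] with k hk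
    exact hN j hj k hk y hy.1 (by simpa [dist_eq_norm] using hy.2)
  rw [dist_comm, dist_eq_norm]
  linarith

/-- Weierstrass theorem in several variables. -/
lemma weierstrass [ProperSpace E] {F : ℕ → E → ℂ} {v : E → ℂ} {U : Set E} (hU : IsOpen U)
    (hF : ∀ x ∈ U, ∃ r > 0, ∀ᶠ j in atTop, ∀ y ∈ Metric.ball x r, DifferentiableAt ℂ (F j) y)
    (hv : TendstoLocallyUniformlyOn F v atTop U) : DifferentiableOn ℂ v U := by
  intro x hx
  obtain ⟨r1, hr1, hd1⟩ := hF x hx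
  obtain ⟨r2, hr2, hr2U⟩ := Metric.isOpen_iff.1 hU x hx
  set r := min r1 r2 / 2 with hr
  have hr0 : 0 < r := by positivity
  have hrr1 : r < r1 := by
    have : min r1 r2 ≤ r1 := min_le_left _ _
    rw [hr]; linarith
  have hrr2 : r < r2 := by
    have : min r1 r2 ≤ r2 := min_le_right _ _
    rw [hr]; linarith
  have hcU : Metric.closedBall x r ⊆ U := (Metric.closedBall_subset_ball hrr2).trans hr2U
  have hun : TendstoUniformlyOn F v atTop (Metric.closedBall x r) :=
    (tendstoLocallyUniformlyOn_iff_forall_isCompact hU).1 hv _ hcU (isCompact_closedBall x r)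
  have hdiff : ∀ᶠ j in atTop, ∀ y ∈ Metric.closedBall x r, DifferentiableAt ℂ (F j) y := by
    filter_upwards [hd1] with j hj y hy
    exact hj y (Metric.closedBall_subset_ball hrr1 hy)
  have hcau : UniformCauchySeqOn (fun j y => fderiv ℂ (F j) y) atTop (Metric.ball x (r/2)) := by
    rw [Metric.uniformCauchySeqOn_iff]
    intro ε hε
    obtain ⟨N1, hN1⟩ := Metric.uniformCauchySeqOn_iff.1 hun.uniformCauchySeqOn (ε * r / 16)
      (by positivity)
    obtain ⟨N2, hN2⟩ := eventually_atTop.1 hdiff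
    refine ⟨max N1 N2, fun j hj k hk y hy => ?_⟩
    have hsub : Metric.ball y (r/2) ⊆ Metric.closedBall x r := by
      intro w hw
      rw [Metric.mem_ball] at hw hy
      rw [Metric.mem_closedBall]
      linarith [dist_triangle w y x]
    have hyc : y ∈ Metric.closedBall x r := hsub (Metric.mem_ball_self (by positivity))
    have dj := hN2 j (le_of_max_le_right hj)
    have dk := hN2 k (le_of_max_le_right hk)
    have hb : ∀ w ∈ Metric.closedBall x r, ‖F j w - F k w‖ < ε * r / 16 := by
      intro w hw
      have := hN1 j (le_of_max_le_left hj) k (le_of_max_le_left hk) w hw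
      rwa [dist_eq_norm] at this
    have h1 : ‖fderiv ℂ (fun w => F j w - F k w) y‖ ≤ (ε * r / 8) / (r/2) := by
      apply Complex.norm_fderiv_le_div_of_mapsTo_ball
      · intro w hw
        exact ((dj w (hsub hw)).sub (dk w (hsub hw))).differentiableWithinAt
      · intro w hw
        rw [Metric.mem_closedBall, dist_eq_norm]
        refine (norm_sub_le _ _).trans ?_
        linarith [hb w (hsub hw), hb y hyc]
      · positivity
    rw [fderiv_fun_sub (dj y hyc) (dk y hyc)] at h1
    rw [dist_eq_norm]
    have h2 : (ε * r / 8) / (r/2) = ε / 4 := by field_simp; norm_num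
    linarith
  have hlim : ∀ y ∈ Metric.ball x (r/2), ∃ l, Tendsto (fun j => fderiv ℂ (F j) y) atTop (𝓝 l) :=
    fun y hy => cauchySeq_tendsto_of_complete (hcau.cauchySeq hy)
  choose! g' hg' using hlim
  have hun' := hcau.tendstoUniformlyOn_of_tendsto hg'
  have hball : Metric.ball x (r/2) ∈ 𝓝 x := Metric.ball_mem_nhds x (by positivity)
  have hsub2 : Metric.ball x (r/2) ⊆ Metric.closedBall x r :=
    (Metric.ball_subset_ball (by linarith)).trans Metric.ball_subset_closedBall
  have hfin : HasFDerivAt v (g' x) x := by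
    refine hasFDerivAt_of_tendstoUniformlyOnFilter (l := atTop) (f := F)
      (f' := fun j y => fderiv ℂ (F j) y) ?_ ?_ ?_
    · exact (tendstoUniformlyOn_iff_tendstoUniformlyOnFilter.1 hun').mono_right
        (le_principal_iff.2 hball)
    · have := hdiff.prod_mk (show ∀ᶠ y in 𝓝 x, y ∈ Metric.ball x (r/2) from hball)
      filter_upwards [this] with p hp
      exact (hp.1 p.2 (hsub2 hp.2)).hasFDerivAt
    · filter_upwards [hball] with y hy
      exact hun.tendsto_at (hsub2 hy)
  exact hfin.differentiableAt.differentiableWithinAt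

end Gen

/-- Hurwitz theorem (existence of zeros). -/
lemma hurwitz {F : ℕ → ℂ → ℂ} {f : ℂ → ℂ} {w : ℂ} {r : ℝ} (hr : 0 < r)
    (hF : ∀ᶠ j in atTop, ∀ y ∈ Metric.closedBall w r, DifferentiableAt ℂ (F j) y)
    (hu : TendstoUniformlyOn F f atTop (Metric.closedBall w r))
    (hf : ContinuousOn f (Metric.closedBall w r))
    (hs : ∀ y ∈ Metric.sphere w r, f y ≠ 0) (h0 : f w = 0) :
    ∀ᶠ j in atTop, ∃ y ∈ Metric.closedBall w r, F j y = 0 := by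
  have hne : (Metric.sphere w r).Nonempty := NormedSpace.sphere_nonempty.2 hr.le
  obtain ⟨y0, hy0, hmin⟩ := (isCompact_sphere w r).exists_isMinOn hne
    ((hf.mono Metric.sphere_subset_closedBall).norm)
  set m := ‖f y0‖ with hm
  have hm0 : 0 < m := norm_pos_iff.2 (hs y0 hy0)
  have hu' := Metric.tendstoUniformlyOn_iff.1 hu (m/3) (by positivity)
  filter_upwards [hu', hF] with j hj hd
  by_contra hcon
  push Not at hcon
  have hdi : DiffContOnCl ℂ (fun y => (F j y)⁻¹) (Metric.ball w r) := by
    apply DifferentiableOn.diffContOnCl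
    rw [closure_ball w hr.ne']
    intro y hy
    exact ((hd y hy).inv (hcon y hy)).differentiableWithinAt
  have hmax : ‖(F j w)⁻¹‖ ≤ (2 * m / 3)⁻¹ := by
    refine Complex.norm_le_of_forall_mem_frontier_norm_le Metric.isBounded_ball hdi
      (fun y hy => ?_) (subset_closure (Metric.mem_ball_self hr))
    rw [frontier_ball w hr.ne'] at hy
    have hyc := Metric.sphere_subset_closedBall hy
    have h1 := hj y hyc
    have h2 : m ≤ ‖f y‖ := hmin hy
    rw [norm_inv]
    apply inv_anti₀ (by positivity)
    rw [dist_eq_norm] at h1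
    have h3 : ‖f y‖ ≤ ‖f y - F j y‖ + ‖F j y‖ := by
      simpa using norm_add_le (f y - F j y) (F j y)
    linarith
  have hwc : w ∈ Metric.closedBall w r := Metric.mem_closedBall_self hr.le
  have h4 := hj w hwc
  rw [h0, dist_zero_left] at h4
  rw [norm_inv, inv_le_inv₀ (norm_pos_iff.2 (hcon w hwc)) (by positivity)] at hmax
  linarith

section Gen2
variable {E : Type} [NormedAddCommGroup E] [NormedSpace ℂ E]

/-- Limits of zero-free functions are zero-free or identically zero on balls. -/
lemma hurwitz_ball [ProperSpace E] {F : ℕ → E → ℂ} {v : E → ℂ} {z : E} {r : ℝ}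
    (hF : ∀ᶠ j in atTop, ∀ y ∈ Metric.ball z r, DifferentiableAt ℂ (F j) y ∧ F j y ≠ 0)
    (hv : TendstoLocallyUniformlyOn F v atTop (Metric.ball z r)) (h0 : v z = 0) :
    ∀ w ∈ Metric.ball z r, v w = 0 := by
  intro w hw
  by_contra hvw
  have hvd : DifferentiableOn ℂ v (Metric.ball z r) := by
    refine weierstrass Metric.isOpen_ball (fun x hx => ?_) hv
    obtain ⟨ρ, hρ, hsub⟩ := Metric.isOpen_iff.1 (Metric.isOpen_ball (x := z) (ε := r)) x hx
    refine ⟨ρ, hρ, ?_⟩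
    filter_upwards [hF] with j hj y hy using (hj y (hsub hy)).1
  have hwz : w ≠ z := fun h => hvw (h ▸ h0)
  have hn : 0 < ‖w - z‖ := norm_pos_iff.2 (sub_ne_zero.2 hwz)
  have hwr : ‖w - z‖ < r := by simpa [dist_eq_norm] using hw
  set ρ := r / ‖w - z‖ with hρ
  have hρ1 : 1 < ρ := by rw [hρ, lt_div_iff₀ hn]; linarith
  let ℓ : ℂ → E := fun ζ => z + ζ • (w - z)
  have hℓd : Differentiable ℂ ℓ := by
    intro ζ
    exact (differentiableAt_id.smul_const (w - z)).const_add z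
  have hℓm : ∀ ζ ∈ Metric.ball (0:ℂ) ρ, ℓ ζ ∈ Metric.ball z r := by
    intro ζ hζ
    rw [mem_ball_zero_iff, hρ, lt_div_iff₀ hn] at hζ
    simpa [ℓ, dist_eq_norm, norm_smul] using hζ
  have hpd : DifferentiableOn ℂ (fun ζ => v (ℓ ζ)) (Metric.ball 0 ρ) :=
    hvd.comp hℓd.differentiableOn hℓm
  have hpa := hpd.analyticOnNhd Metric.isOpen_ball
  have h0m : (0:ℂ) ∈ Metric.ball (0:ℂ) ρ := Metric.mem_ball_self (by linarith)
  rcases (hpa 0 h0m).eventually_eq_zero_or_eventually_ne_zero with h | h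
  · have := hpa.eqOn_zero_of_preconnected_of_eventuallyEq_zero
      (convex_ball (0:ℂ) ρ).isPreconnected h0m h
    have h1 := this (x := 1) (by simpa using hρ1)
    apply hvw
    simpa [ℓ] using h1
  · rw [eventually_nhdsWithin_iff, Metric.eventually_nhds_iff] at h
    obtain ⟨ε, hε, hε'⟩ := h
    set δ := min ε 1 / 2 with hδ
    have hδ0 : 0 < δ := by positivity
    have hδε : δ < ε := by
      have : min ε 1 ≤ ε := min_le_left _ _
      rw [hδ]; linarith
    have hδ1 : δ < 1 := by
      have : min ε 1 ≤ 1 := min_le_right _ _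
      rw [hδ]; linarith
    have hcb : Metric.closedBall (0:ℂ) δ ⊆ Metric.ball 0 ρ :=
      Metric.closedBall_subset_ball (by linarith)
    have hz := hurwitz (F := fun j ζ => F j (ℓ ζ)) (f := fun ζ => v (ℓ ζ)) (w := 0) hδ0
      (by
        filter_upwards [hF] with j hj y hy
        exact (hj _ (hℓm y (hcb hy))).1.comp y hℓd.differentiableAt)
      (by
        have := (tendstoLocallyUniformlyOn_iff_forall_isCompact Metric.isOpen_ball).1 hv
          (ℓ '' Metric.closedBall 0 δ) (by
            rintro _ ⟨y, hy, rfl⟩; exact hℓm y (hcb hy))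
          ((isCompact_closedBall 0 δ).image hℓd.continuous)
        rw [Metric.tendstoUniformlyOn_iff] at this ⊢
        intro e he
        filter_upwards [this e he] with j hj y hy using hj _ (Set.mem_image_of_mem ℓ hy))
      (hpd.continuousOn.mono hcb)
      (by
        intro y hy
        apply hε'
        · rw [Metric.mem_sphere] at hy; rw [hy]; exact hδε
        · intro hy0
          simp only [Set.mem_singleton_iff] at hy0
          rw [hy0] at hy
          simp at hy
          linarith)
      (by simpa [ℓ] using h0)
    obtain ⟨j, ⟨y, hy, hy0⟩, hj⟩ := (hz.and hF).exists
    exact (hj _ (hℓm y (hcb hy))).2 hy0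

/-- Convergence in the sphere at a point. -/
def SphConv (a : ℕ → ℂ) : Prop :=
  (∃ q, Tendsto a atTop (𝓝 q)) ∨ Tendsto (fun j => ‖a j‖) atTop atTop

lemma extract_diag (a : ℕ → ℕ → ℂ) :
    ∃ φ : ℕ → ℕ, StrictMono φ ∧ ∀ i, SphConv (fun j => a (φ j) i) := by
  let τ : ℕ → ℕ → ℂ × ℝ := fun j i => (a j i / (1 + ‖a j i‖^2 : ℝ), 1 / (1 + ‖a j i‖^2))
  have hK : IsCompact (Set.pi Set.univ (fun _ : ℕ => Metric.closedBall (0 : ℂ × ℝ) 1)) :=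
    isCompact_univ_pi (fun _ => isCompact_closedBall _ _)
  obtain ⟨p, -, φ, hφ, hlim⟩ := hK.tendsto_subseq (x := τ) (by
    intro j i _
    rw [mem_closedBall_zero_iff, Prod.norm_def, max_le_iff]
    have hpos : (0:ℝ) < 1 + ‖a j i‖^2 := by positivity
    constructor
    · simp only [τ]
      rw [norm_div, Complex.norm_real, Real.norm_of_nonneg hpos.le, div_le_one hpos]
      nlinarith [sq_nonneg (‖a j i‖ - 1), norm_nonneg (a j i)]
    · simp only [τ]
      rw [Real.norm_of_nonneg (by positivity), div_le_one hpos]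
      nlinarith [norm_nonneg (a j i)])
  refine ⟨φ, hφ, fun i => ?_⟩
  have hi : Tendsto (fun j => τ (φ j) i) atTop (𝓝 (p i)) := (tendsto_pi_nhds.1 hlim) i
  have h1 : Tendsto (fun j => (τ (φ j) i).1) atTop (𝓝 (p i).1) :=
    (continuous_fst.tendsto _).comp hi
  have h2 : Tendsto (fun j => (τ (φ j) i).2) atTop (𝓝 (p i).2) :=
    (continuous_snd.tendsto _).comp hi
  by_cases hp : (p i).2 = 0
  · right
    rw [hp] at h2
    have h3 : Tendsto (fun j => (τ (φ j) i).2) atTop (𝓝[>] 0) := by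
      refine tendsto_nhdsWithin_iff.2 ⟨h2, Eventually.of_forall fun j => ?_⟩
      simp only [τ, Set.mem_Ioi]; positivity
    have h4 := h3.inv_tendsto_nhdsGT_zero
    rw [tendsto_atTop] at h4 ⊢
    intro b
    filter_upwards [h4 (1 + b^2)] with j hj
    simp only [τ, Pi.inv_apply, one_div, inv_inv] at hj
    by_contra hb
    push Not at hb
    nlinarith [norm_nonneg (a (φ j) i)]
  · left
    refine ⟨(p i).1 / ((p i).2 : ℝ), ?_⟩
    have h3 : Tendsto (fun j => (τ (φ j) i).1 / (((τ (φ j) i).2 : ℝ) : ℂ)) atTop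
        (𝓝 ((p i).1 / ((p i).2 : ℝ))) :=
      h1.div ((Complex.continuous_ofReal.tendsto _).comp h2) (by exact_mod_cast hp)
    refine h3.congr (fun j => ?_)
    have hpos : (1 + ‖a (φ j) i‖^2 : ℝ) ≠ 0 := by positivity
    have hpos' : ((1 + ‖a (φ j) i‖^2 : ℝ) : ℂ) ≠ 0 := by exact_mod_cast hpos
    simp only [τ]
    push_cast at hpos' ⊢
    field_simp

/-- Locally uniformly bounded at `z`. -/
def BdAt (t : ℕ → E → ℂ) (z : E) : Prop :=
  ∃ r > 0, ∃ M : ℝ, ∀ᶠ j in atTop, ∀ y ∈ Metric.ball z r, ‖t j y‖ ≤ M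

/-- Locally uniformly tending to infinity at `z`. -/
def InfAt (t : ℕ → E → ℂ) (z : E) : Prop :=
  ∃ r > 0, ∀ M : ℝ, ∀ᶠ j in atTop, ∀ y ∈ Metric.ball z r, M < ‖t j y‖

lemma local_dich [ProperSpace E] {t : ℕ → E → ℂ} {z : E} {D : Set E} (hD : Dense D)
    (hc : ∀ d ∈ D, SphConv (fun j => t j d)) {r0 C : ℝ} (hr0 : 0 < r0) (hC : 0 ≤ C)
    (ht : ∀ᶠ j in atTop, ∀ y ∈ Metric.ball z r0,
      DifferentiableAt ℂ (t j) y ∧ ‖fderiv ℂ (t j) y‖ ≤ C * (1 + ‖t j y‖^2)) :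
    BdAt t z ∨ InfAt t z := by
  set r := min r0 (1 / (80 * (C + 1))) with hr
  have hrpos : 0 < r := by positivity
  have hrr0 : r ≤ r0 := min_le_left _ _
  have hrC : 80 * (C + 1) * r ≤ 1 := by
    have : r ≤ 1 / (80 * (C + 1)) := min_le_right _ _
    rw [le_div_iff₀ (by positivity)] at this
    linarith
  have hconv : Convex ℝ (Metric.ball z r) := convex_ball z r
  have ht' : ∀ᶠ j in atTop, ∀ y ∈ Metric.ball z r,
      DifferentiableAt ℂ (t j) y ∧ ‖fderiv ℂ (t j) y‖ ≤ C * (1 + ‖t j y‖^2) := by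
    filter_upwards [ht] with j hj y hy using hj y (Metric.ball_subset_ball hrr0 hy)
  have hfence : ∀ᶠ j in atTop, ∀ x ∈ Metric.ball z r, ∀ y ∈ Metric.ball z r, ∀ A : ℝ, A ≤ 2 →
      ‖t j x‖ ≤ A → ‖t j y‖ ≤ A + 1/4 := by
    filter_upwards [ht'] with j hj x hx y hy A hA hxA
    refine fence hconv hx hy (fun w hw => (hj w hw).1) (fun w hw => (hj w hw).2) hxA hA ?_
    rw [Metric.mem_ball, dist_eq_norm] at hx hy
    have : ‖y - x‖ < 2 * r := by
      have e : y - x = (y - z) - (x - z) := by abel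
      rw [e]
      have := norm_sub_le (y - z) (x - z)
      linarith
    have h2 : 40 * C * ‖y - x‖ ≤ 40 * C * (2 * r) := by gcongr
    nlinarith
  obtain ⟨d, hdD, hdb⟩ := hD.exists_mem_open (Metric.isOpen_ball (x := z) (ε := r))
    ⟨z, Metric.mem_ball_self hrpos⟩
  have hcase : (∀ᶠ j in atTop, ‖t j d‖ ≤ 3/2) ∨ (∀ᶠ j in atTop, 5/4 < ‖t j d‖) := by
    rcases hc d hdD with ⟨q, hq⟩ | h
    · rcases lt_or_ge ‖q‖ (3/2) with h | h
      · left
        filter_upwards [hq.norm.eventually (gt_mem_nhds h)] with j hj using hj.le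
      · right
        exact hq.norm.eventually (lt_mem_nhds (by linarith))
    · right
      exact h.eventually_gt_atTop _
  rcases hcase with h | h
  · left
    refine ⟨r, hrpos, 2, ?_⟩
    filter_upwards [h, hfence] with j h1 h2 y hy
    have := h2 d hdb y hy _ (by norm_num) h1
    linarith
  · have hone : ∀ᶠ j in atTop, ∀ y ∈ Metric.ball z r, 1 < ‖t j y‖ := by
      filter_upwards [h, hfence] with j h1 h2 y hy
      by_contra hcon
      push Not at hcon
      have := h2 y hy d hdb 1 (by norm_num) hcon
      linarith
    let u : ℕ → E → ℂ := fun j y => (t j y)⁻¹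
    have hud : ∀ᶠ j in atTop, ∀ y ∈ Metric.ball z r, DifferentiableAt ℂ (u j) y ∧ u j y ≠ 0 := by
      filter_upwards [hone, ht'] with j h1 h2 y hy
      have hne : t j y ≠ 0 := norm_pos_iff.1 (by linarith [h1 y hy])
      exact ⟨(h2 y hy).1.inv hne, inv_ne_zero hne⟩
    have huL : ∀ᶠ j in atTop, ∀ x ∈ Metric.ball z r, ∀ y ∈ Metric.ball z r,
        ‖u j x - u j y‖ ≤ (2 * C) * ‖x - y‖ := by
      filter_upwards [hone, ht', hud] with j h1 h2 h3
      refine lip_of_bound hconv (fun y hy => (h3 y hy).1) (fun y hy => ?_)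
      have hy1 := h1 y hy
      have hne : t j y ≠ 0 := norm_pos_iff.1 (by linarith)
      rw [fderiv_inv_norm (h2 y hy).1 hne, div_le_iff₀ (by positivity)]
      refine (h2 y hy).2.trans ?_
      have : 1 + ‖t j y‖^2 ≤ 2 * ‖t j y‖^2 := by nlinarith
      nlinarith
    have hcc : ∀ e ∈ D, e ∈ Metric.ball z r → CauchySeq (fun j => u j e) := by
      intro e heD heb
      rcases hc e heD with ⟨q, hq⟩ | h
      · have hq1 : 1 ≤ ‖q‖ := by
          refine ge_of_tendsto hq.norm ?_
          filter_upwards [hone] with j hj using (hj e heb).le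
        have hq0 : q ≠ 0 := norm_pos_iff.1 (by linarith)
        exact (hq.inv₀ hq0).cauchySeq
      · have : Tendsto (fun j => u j e) atTop (𝓝 0) := by
          rw [tendsto_zero_iff_norm_tendsto_zero]
          simp only [u, norm_inv]
          exact h.inv_tendsto_atTop
        exact this.cauchySeq
    obtain ⟨v, hv⟩ := dense_conv Metric.isOpen_ball huL
      (by rw [hD.closure_eq]; exact Set.subset_univ _) hcc
    have hzb : z ∈ Metric.ball z r := Metric.mem_ball_self hrpos
    by_cases hvz : v z = 0
    · right
      have hv0 := hurwitz_ball hud hv hvz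
      have hsub : Metric.closedBall z (r/2) ⊆ Metric.ball z r :=
        Metric.closedBall_subset_ball (by linarith)
      have hun := (tendstoLocallyUniformlyOn_iff_forall_isCompact Metric.isOpen_ball).1 hv _ hsub
        (isCompact_closedBall z (r/2))
      refine ⟨r/2, by positivity, fun M => ?_⟩
      have := Metric.tendstoUniformlyOn_iff.1 hun (1 / (|M| + 1)) (by positivity)
      filter_upwards [this, hone] with j hj h1 y hy
      have hyc := Metric.ball_subset_closedBall hy
      have h2 := hj y hyc
      have h3 := h1 y (hsub hyc)
      rw [hv0 y (hsub hyc), dist_zero_left] at h2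
      simp only [u, norm_inv] at h2
      rw [inv_eq_one_div, one_div_lt_one_div (by linarith) (by positivity)] at h2
      linarith [le_abs_self M]
    · left
      have hpos : 0 < ‖v z‖ := norm_pos_iff.2 hvz
      have hvc : ContinuousOn v (Metric.ball z r) :=
        hv.continuousOn (Eventually.frequently (by
          filter_upwards [hud] with j hj y hy
          exact (hj y hy).1.continuousAt.continuousWithinAt))
      have hvca : ContinuousAt v z := hvc.continuousAt (Metric.isOpen_ball.mem_nhds hzb)
      obtain ⟨T, hT, hTj⟩ := Metric.tendstoLocallyUniformlyOn_iff.1 hv (‖v z‖/3) (by positivity)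
        z hzb
      rw [Metric.isOpen_ball.nhdsWithin_eq hzb] at hT
      have hnear : ∀ᶠ y in 𝓝 z, ‖v z‖ * (2/3) < ‖v y‖ :=
        hvca.norm.eventually (lt_mem_nhds (by linarith))
      obtain ⟨ρ, hρ, hsub⟩ := Metric.mem_nhds_iff.1 (inter_mem hT (inter_mem hnear
        (Metric.isOpen_ball.mem_nhds hzb)))
      refine ⟨ρ, hρ, 3 / ‖v z‖, ?_⟩
      filter_upwards [hTj, hone] with j hj h1 y hy
      obtain ⟨y1, y2, y3⟩ := hsub hy
      have h2 := hj y y1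
      have h3 := h1 y y3
      simp only [Set.mem_ofPred_eq] at y2
      rw [dist_eq_norm] at h2
      have h4 : ‖v y‖ ≤ ‖v y - u j y‖ + ‖u j y‖ := by
        simpa using norm_add_le (v y - u j y) (u j y)
      have h5 : ‖v z‖ / 3 ≤ ‖u j y‖ := by linarith
      simp only [u, norm_inv] at h5
      rw [le_inv_comm₀ (by positivity) (by linarith)] at h5
      simpa using h5

/-- Marty criterion (sufficiency). -/
lemma marty [ProperSpace E] {Ω : Set E} (hΩ : IsOpen Ω) (hconn : IsPreconnected Ω)
    {s : ℕ → E → ℂ}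
    (hs : ∀ K, K ⊆ Ω → IsCompact K → ∃ C : ℝ, ∀ᶠ j in atTop, ∀ z ∈ K,
      DifferentiableAt ℂ (s j) z ∧ ‖fderiv ℂ (s j) z‖ ≤ C * (1 + ‖s j z‖^2)) :
    ∃ φ : ℕ → ℕ, StrictMono φ ∧
      ((∃ g : E → ℂ, DifferentiableOn ℂ g Ω ∧
        TendstoLocallyUniformlyOn (fun j => s (φ j)) g atTop Ω) ∨
      (∀ K, K ⊆ Ω → IsCompact K → ∀ M : ℝ, ∀ᶠ j in atTop, ∀ z ∈ K, M < ‖s (φ j) z‖)) := by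
  have : SecondCountableTopology E := secondCountable_of_proper
  let D : Set E := Set.range (TopologicalSpace.denseSeq E)
  have hD : Dense D := TopologicalSpace.denseRange_denseSeq E
  obtain ⟨φ, hφ, hφc⟩ := extract_diag (fun j i => s j (TopologicalSpace.denseSeq E i))
  refine ⟨φ, hφ, ?_⟩
  let t : ℕ → E → ℂ := fun j => s (φ j)
  have hc : ∀ d ∈ D, SphConv (fun j => t j d) := by
    rintro _ ⟨i, rfl⟩; exact hφc i
  have hloc : ∀ z ∈ Ω, ∃ r > 0, ∃ C, 0 ≤ C ∧ Metric.ball z r ⊆ Ω ∧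
      ∀ᶠ j in atTop, ∀ y ∈ Metric.ball z r,
      DifferentiableAt ℂ (t j) y ∧ ‖fderiv ℂ (t j) y‖ ≤ C * (1 + ‖t j y‖^2) := by
    intro z hz
    obtain ⟨r, hr, hrΩ⟩ := Metric.nhds_basis_closedBall.mem_iff.1 (hΩ.mem_nhds hz)
    obtain ⟨C, hC⟩ := hs _ hrΩ (isCompact_closedBall z r)
    refine ⟨r, hr, |C|, abs_nonneg C, Metric.ball_subset_closedBall.trans hrΩ, ?_⟩
    filter_upwards [hφ.tendsto_atTop.eventually hC] with j hj y hy
    obtain ⟨h1, h2⟩ := hj y (Metric.ball_subset_closedBall hy)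
    exact ⟨h1, h2.trans (mul_le_mul_of_nonneg_right (le_abs_self C) (by positivity))⟩
  have hdich : ∀ z ∈ Ω, BdAt t z ∨ InfAt t z := by
    intro z hz
    obtain ⟨r, hr, C, hC, -, h⟩ := hloc z hz
    exact local_dich hD hc hr hC h
  have hAo : IsOpen {z | BdAt t z} := by
    rw [Metric.isOpen_iff]
    rintro z ⟨r, hr, M, h⟩
    refine ⟨r/2, by positivity, fun y hy => ⟨r/2, by positivity, M, ?_⟩⟩
    filter_upwards [h] with j hj w hw
    apply hj
    rw [Metric.mem_ball] at hw hy ⊢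
    linarith [dist_triangle w y z]
  have hBo : IsOpen {z | InfAt t z} := by
    rw [Metric.isOpen_iff]
    rintro z ⟨r, hr, h⟩
    refine ⟨r/2, by positivity, fun y hy => ⟨r/2, by positivity, fun M => ?_⟩⟩
    filter_upwards [h M] with j hj w hw
    apply hj
    rw [Metric.mem_ball] at hw hy ⊢
    linarith [dist_triangle w y z]
  have hdisj : ∀ z, BdAt t z → InfAt t z → False := by
    rintro z ⟨r, hr, M, h⟩ ⟨r', hr', h'⟩
    obtain ⟨j, h1, h2⟩ := (h.and (h' M)).exists
    linarith [h1 z (Metric.mem_ball_self hr), h2 z (Metric.mem_ball_self hr')]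
  have halt : (∀ z ∈ Ω, BdAt t z) ∨ (∀ z ∈ Ω, InfAt t z) := by
    by_contra hcon
    push Not at hcon
    obtain ⟨⟨x, hx, hxA⟩, ⟨y, hy, hyB⟩⟩ := hcon
    obtain ⟨w, -, hw1, hw2⟩ := hconn _ _ hAo hBo (fun z hz => hdich z hz)
      ⟨y, hy, (hdich y hy).resolve_right hyB⟩ ⟨x, hx, (hdich x hx).resolve_left hxA⟩
    exact hdisj w hw1 hw2
  rcases halt with hA | hB
  · left
    have hlocv : ∀ z ∈ Ω, ∃ r > 0, ∃ v, Metric.ball z r ⊆ Ω ∧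
        TendstoLocallyUniformlyOn t v atTop (Metric.ball z r) := by
      intro z hz
      obtain ⟨r1, hr1, C, hC, hsub, h⟩ := hloc z hz
      obtain ⟨r2, hr2, M, hM⟩ := hA z hz
      have s1 : Metric.ball z (min r1 r2) ⊆ Metric.ball z r1 :=
        Metric.ball_subset_ball (min_le_left _ _)
      have s2 : Metric.ball z (min r1 r2) ⊆ Metric.ball z r2 :=
        Metric.ball_subset_ball (min_le_right _ _)
      refine ⟨min r1 r2, by positivity, ?_⟩
      obtain ⟨v, hv⟩ := dense_conv (F := t) (U := Metric.ball z (min r1 r2)) (D := D)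
        (L := C * (1 + M^2)) Metric.isOpen_ball
        (by
          filter_upwards [h, hM] with j h1 h2
          refine lip_of_bound (convex_ball _ _) (fun y hy => (h1 y (s1 hy)).1) (fun y hy => ?_)
          refine (h1 y (s1 hy)).2.trans ?_
          have := h2 y (s2 hy)
          gcongr)
        (by rw [hD.closure_eq]; exact Set.subset_univ _)
        (by
          intro d hd hdb
          rcases hc d hd with ⟨q, hq⟩ | hinf
          · exact hq.cauchySeq
          · exfalso
            obtain ⟨j, h1, h2⟩ := ((hinf.eventually_gt_atTop M).and hM).exists
            linarith [h2 d (s2 hdb)])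
      exact ⟨v, s1.trans hsub, hv⟩
    have hpt : ∀ z ∈ Ω, ∃ l, Tendsto (fun j => t j z) atTop (𝓝 l) := by
      intro z hz
      obtain ⟨r, hr, v, -, hv⟩ := hlocv z hz
      exact ⟨v z, hv.tendsto_at (Metric.mem_ball_self hr)⟩
    choose! g hg using hpt
    have hlu : TendstoLocallyUniformlyOn t g atTop Ω := by
      rw [Metric.tendstoLocallyUniformlyOn_iff]
      intro ε hε z hz
      obtain ⟨r, hr, v, hsub, hv⟩ := hlocv z hz
      have hzb := Metric.mem_ball_self (x := z) hr
      obtain ⟨T, hT, hTj⟩ := Metric.tendstoLocallyUniformlyOn_iff.1 hv ε hε z hzb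
      rw [Metric.isOpen_ball.nhdsWithin_eq hzb] at hT
      refine ⟨T ∩ Metric.ball z r, mem_nhdsWithin_of_mem_nhds
        (inter_mem hT (Metric.isOpen_ball.mem_nhds hzb)), ?_⟩
      filter_upwards [hTj] with j hj y hy
      have : g y = v y := tendsto_nhds_unique (hg y (hsub hy.2)) (hv.tendsto_at hy.2)
      rw [this]
      exact hj y hy.1
    refine ⟨g, weierstrass hΩ (fun x hx => ?_) hlu, hlu⟩
    obtain ⟨r, hr, C, -, -, h⟩ := hloc x hx
    refine ⟨r, hr, ?_⟩
    filter_upwards [h] with j hj y hy using (hj y hy).1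
  · right
    intro K hK hKc M
    refine hKc.induction_on (p := fun S => ∀ᶠ j in atTop, ∀ z ∈ S, M < ‖s (φ j) z‖) ?_ ?_ ?_ ?_
    · simp
    · intro S T hST hT
      filter_upwards [hT] with j hj z hz using hj z (hST hz)
    · intro S T hS hT
      filter_upwards [hS, hT] with j h1 h2 z hz
      rcases hz with hz | hz
      · exact h1 z hz
      · exact h2 z hz
    · intro x hx
      obtain ⟨r, hr, h⟩ := hB x (hK hx)
      exact ⟨Metric.ball x r, mem_nhdsWithin_of_mem_nhds (Metric.ball_mem_nhds x hr), h M⟩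

end Gen2

/-- The differentiated form of the equation. -/
lemma ode_second {a b c : ℂ} {k G : ℂ → ℂ} (hk : Differentiable ℂ k) (hG : Differentiable ℂ G)
    (heq : ∀ w, G w * ((k w - a) * (k w - b) * (k w - c)) = deriv k w ^ 2)
    (hne : ∃ w, deriv k w ≠ 0) (w : ℂ) :
    2 * G w * deriv (deriv k) w =
      G w ^ 2 * ((k w - b) * (k w - c) + (k w - a) * (k w - c) + (k w - a) * (k w - b))
        + deriv G w * deriv k w := by
  have hk' : Differentiable ℂ (deriv k) := hk.deriv
  have hk'' : Differentiable ℂ (deriv (deriv k)) := hk'.deriv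
  have hG' : Differentiable ℂ (deriv G) := hG.deriv
  have h1 : ∀ w, deriv k w * (2 * G w * deriv (deriv k) w -
      (G w ^ 2 * ((k w - b) * (k w - c) + (k w - a) * (k w - c) + (k w - a) * (k w - b))
        + deriv G w * deriv k w)) = 0 := by
    intro w
    have dk := (hk w).hasDerivAt
    have dG := (hG w).hasDerivAt
    have dk' := (hk' w).hasDerivAt
    have L := dG.mul (((dk.sub_const a).mul (dk.sub_const b)).mul (dk.sub_const c))
    have R := dk'.pow 2
    have hfun : (G * ((fun w => k w - a) * (fun w => k w - b) * (fun w => k w - c))) =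
      deriv k ^ 2 := by
      funext w; simpa using heq w
    have e := L.unique (hfun ▸ R)
    have h0 := heq w
    simp at e
    linear_combination (-(G w)) * e + deriv G w * h0
  have han1 : AnalyticOnNhd ℂ (deriv k) Set.univ := hk'.differentiableOn.analyticOnNhd isOpen_univ
  have hd2 : Differentiable ℂ (fun w => 2 * G w * deriv (deriv k) w -
      (G w ^ 2 * ((k w - b) * (k w - c) + (k w - a) * (k w - c) + (k w - a) * (k w - b))
        + deriv G w * deriv k w)) := by fun_prop
  have han2 := hd2.differentiableOn.analyticOnNhd isOpen_univ
  rcases AnalyticOnNhd.eq_zero_or_eq_zero_of_mul_eq_zero han1 han2 (fun w _ => h1 w)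
    isPreconnected_univ with h | h
  · obtain ⟨w0, hw0⟩ := hne
    exact absurd (h w0 (Set.mem_univ _)) hw0
  · exact sub_eq_zero.1 (h w (Set.mem_univ _))

/-- No solutions of the elliptic equation converge to infinity. -/
lemma inf_case {a b c Γ : ℂ} {k G : ℕ → ℂ → ℂ} (hk : ∀ j, Differentiable ℂ (k j))
    (hG : ∀ j, Differentiable ℂ (G j))
    (heq : ∀ j w, G j w * ((k j w - a) * (k j w - b) * (k j w - c)) = deriv (k j) w ^ 2)
    (hne : ∀ j, ∃ w, deriv (k j) w ≠ 0)
    (hΓ : Γ ≠ 0) (hG0 : Tendsto (fun j => G j 0) atTop (𝓝 Γ))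
    (hG1 : Tendsto (fun j => deriv (G j) 0) atTop (𝓝 0))
    (hinf : ∀ M : ℝ, ∀ᶠ j in atTop, ∀ z ∈ Metric.closedBall (0:ℂ) 1, M < ‖k j z‖) : False := by
  let v : ℕ → ℂ → ℂ := fun j z => (k j z)⁻¹
  have hkne : ∀ᶠ j in atTop, ∀ z ∈ Metric.ball (0:ℂ) 1, k j z ≠ 0 := by
    filter_upwards [hinf 0] with j hj z hz
    exact norm_pos_iff.1 (hj z (Metric.ball_subset_closedBall hz))
  have hvd : ∀ᶠ j in atTop, DifferentiableOn ℂ (v j) (Metric.ball 0 1) := by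
    filter_upwards [hkne] with j hj z hz
    exact ((hk j z).inv (hj z hz)).differentiableWithinAt
  have hv : TendstoLocallyUniformlyOn v (fun _ => 0) atTop (Metric.ball 0 1) := by
    apply TendstoUniformlyOn.tendstoLocallyUniformlyOn
    rw [Metric.tendstoUniformlyOn_iff]
    intro ε hε
    filter_upwards [hinf (1/ε)] with j hj z hz
    have h1 := hj z (Metric.ball_subset_closedBall hz)
    rw [dist_zero_left]
    simp only [v, norm_inv]
    rw [inv_lt_comm₀ (lt_trans (by positivity) h1) hε]
    simpa using h1
  have h0m : (0:ℂ) ∈ Metric.ball (0:ℂ) 1 := by simp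
  have hv1 := hv.deriv hvd Metric.isOpen_ball
  have hvd1 : ∀ᶠ j in atTop, DifferentiableOn ℂ ((deriv ∘ v) j) (Metric.ball 0 1) := by
    filter_upwards [hvd] with j hj
    exact hj.deriv Metric.isOpen_ball
  have hv2 := hv1.deriv hvd1 Metric.isOpen_ball
  have l0 : Tendsto (fun j => v j 0) atTop (𝓝 0) := hv.tendsto_at h0m
  have l1 : Tendsto (fun j => deriv (v j) 0) atTop (𝓝 0) := by
    simpa using hv1.tendsto_at h0m
  have l2 : Tendsto (fun j => deriv (deriv (v j)) 0) atTop (𝓝 0) := by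
    simpa using hv2.tendsto_at h0m
  have hid : ∀ᶠ j in atTop, -2 * G j 0 * deriv (deriv (v j)) 0 +
      4 * G j 0 ^ 2 * ((1 - a * v j 0) * (1 - b * v j 0) * (1 - c * v j 0)) -
      (G j 0 ^ 2 * ((1 - b * v j 0) * (1 - c * v j 0) + (1 - a * v j 0) * (1 - c * v j 0) +
        (1 - a * v j 0) * (1 - b * v j 0)) - deriv (G j) 0 * deriv (v j) 0) = 0 := by
    filter_upwards [hkne] with j hj
    have hk0 : k j 0 ≠ 0 := hj 0 h0m
    have e1 : ∀ z ∈ Metric.ball (0:ℂ) 1, deriv (v j) z = -deriv (k j) z / k j z ^ 2 := fun z hz =>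
      ((hk j z).hasDerivAt.inv (hj z hz)).deriv
    have e2 : deriv (deriv (v j)) 0 =
        -deriv (deriv (k j)) 0 / k j 0 ^ 2 + 2 * deriv (k j) 0 ^ 2 / k j 0 ^ 3 := by
      have : deriv (v j) =ᶠ[𝓝 0] fun z => -deriv (k j) z / k j z ^ 2 := by
        filter_upwards [Metric.isOpen_ball.mem_nhds h0m] with z hz using e1 z hz
      rw [this.deriv_eq]
      have hd := (((hk j).deriv 0).hasDerivAt.neg).div ((hk j 0).hasDerivAt.pow 2)
        (pow_ne_zero 2 hk0)
      have h := hd.deriv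
      refine Eq.trans h ?_
      simp
      field_simp
    have o2 := ode_second (hk j) (hG j) (heq j) (hne j) 0
    have o1 := heq j 0
    rw [e2, e1 0 h0m, ← o1]
    simp only [v]
    field_simp
    linear_combination (k j 0) * o2
  have hlim : Tendsto (fun j => -2 * G j 0 * deriv (deriv (v j)) 0 +
      4 * G j 0 ^ 2 * ((1 - a * v j 0) * (1 - b * v j 0) * (1 - c * v j 0)) -
      (G j 0 ^ 2 * ((1 - b * v j 0) * (1 - c * v j 0) + (1 - a * v j 0) * (1 - c * v j 0) +
        (1 - a * v j 0) * (1 - b * v j 0)) - deriv (G j) 0 * deriv (v j) 0)) atTop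
      (𝓝 (-2 * Γ * 0 +
      4 * Γ ^ 2 * ((1 - a * 0) * (1 - b * 0) * (1 - c * 0)) -
      (Γ ^ 2 * ((1 - b * 0) * (1 - c * 0) + (1 - a * 0) * (1 - c * 0) +
        (1 - a * 0) * (1 - b * 0)) - 0 * 0))) := by
    have A : Tendsto (fun j => 1 - a * v j 0) atTop (𝓝 (1 - a * 0)) := (l0.const_mul a).const_sub 1
    have B : Tendsto (fun j => 1 - b * v j 0) atTop (𝓝 (1 - b * 0)) := (l0.const_mul b).const_sub 1
    have C : Tendsto (fun j => 1 - c * v j 0) atTop (𝓝 (1 - c * 0)) := (l0.const_mul c).const_sub 1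
    exact ((((hG0.const_mul (-2)).mul l2).add (((hG0.pow 2).const_mul 4).mul
      ((A.mul B).mul C)))).sub (((hG0.pow 2).mul (((B.mul C).add (A.mul C)).add (A.mul B))).sub
        (hG1.mul l1))
  have hfin := tendsto_nhds_unique (hlim.congr' hid) tendsto_const_nhds
  apply hΓ
  have : Γ ^ 2 = 0 := by linear_combination hfin
  exact pow_eq_zero_iff (two_ne_zero) |>.1 this

/-- Bound of the spherical derivative from the equation. -/
lemma ode_bound {a b c k d g : ℂ} (heq : g * ((k - a) * (k - b) * (k - c)) = d ^ 2) {A : ℝ}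
    (hg : ‖g‖ ≤ A) :
    ‖d‖ ≤ 2 * ((A + 1) * ((1 + ‖a‖) * (1 + ‖b‖) * (1 + ‖c‖))) * (1 + ‖k‖ ^ 2) := by
  have hA : 0 ≤ A := (norm_nonneg _).trans hg
  obtain ⟨Q, hQ⟩ : ∃ Q, Q = (1 + ‖a‖) * (1 + ‖b‖) * (1 + ‖c‖) := ⟨_, rfl⟩
  rw [← hQ]
  have h1a : 1 ≤ 1 + ‖a‖ := by linarith [norm_nonneg a]
  have h1b : 1 ≤ 1 + ‖b‖ := by linarith [norm_nonneg b]
  have h1c : 1 ≤ 1 + ‖c‖ := by linarith [norm_nonneg c]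
  have hQ1 : 1 ≤ Q := hQ ▸ one_le_mul_of_one_le_of_one_le (one_le_mul_of_one_le_of_one_le h1a h1b) h1c
  have hx : ∀ x : ℂ, ‖k - x‖ ≤ (1 + ‖x‖) * (1 + ‖k‖) := fun x => by
    have := norm_sub_le k x
    nlinarith [norm_nonneg k, norm_nonneg x, mul_nonneg (norm_nonneg k) (norm_nonneg x)]
  have h2 : ‖d‖ ^ 2 ≤ A * (Q * (1 + ‖k‖) ^ 3) := by
    rw [← norm_pow, ← heq, norm_mul, norm_mul, norm_mul]
    calc ‖g‖ * (‖k - a‖ * ‖k - b‖ * ‖k - c‖) ≤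
        A * (((1 + ‖a‖) * (1 + ‖k‖)) * ((1 + ‖b‖) * (1 + ‖k‖)) * ((1 + ‖c‖) * (1 + ‖k‖))) := by
          have ha := hx a
          have hb := hx b
          have hc := hx c
          gcongr
      _ = _ := by rw [hQ]; ring
  have h3 : ‖d‖ ^ 2 ≤ ((A + 1) * Q * (1 + ‖k‖) ^ 2) ^ 2 := by
    refine h2.trans ?_
    have e1 : (1 + ‖k‖) ^ 3 ≤ (1 + ‖k‖) ^ 4 :=
      pow_le_pow_right₀ (by linarith [norm_nonneg k]) (by norm_num)
    have e2 : A * Q ≤ ((A + 1) * Q) ^ 2 := by nlinarith [mul_nonneg hA (zero_le_one.trans hQ1)]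
    calc A * (Q * (1 + ‖k‖) ^ 3) = (A * Q) * (1 + ‖k‖) ^ 3 := by ring
      _ ≤ ((A + 1) * Q) ^ 2 * (1 + ‖k‖) ^ 4 := by gcongr
      _ = _ := by ring
  have h4 : ‖d‖ ≤ (A + 1) * Q * (1 + ‖k‖) ^ 2 :=
    (pow_le_pow_iff_left₀ (norm_nonneg _) (by positivity) two_ne_zero).1 h3
  refine h4.trans ?_
  have h5 : (1 + ‖k‖) ^ 2 ≤ 2 * (1 + ‖k‖ ^ 2) := by nlinarith [sq_nonneg (‖k‖ - 1)]
  calc (A + 1) * Q * (1 + ‖k‖) ^ 2 ≤ (A + 1) * Q * (2 * (1 + ‖k‖ ^ 2)) := by gcongr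
    _ = _ := by ring

/-- The elliptic equation has no entire solutions with the appropriate second order condition. -/
lemma no_entire {a b c Γ : ℂ} (hab : a ≠ b) (hac : a ≠ c) (hbc : b ≠ c) (hΓ : Γ ≠ 0)
    {k : ℂ → ℂ} (hk : Differentiable ℂ k)
    (heq : ∀ w, Γ * ((k w - a) * (k w - b) * (k w - c)) = deriv k w ^ 2)
    (heq2 : ∀ w, Γ * ((k w - b) * (k w - c) + (k w - a) * (k w - c) + (k w - a) * (k w - b))
      = 2 * deriv (deriv k) w) : False := by
  by_cases hconst : ∀ w, deriv k w = 0
  · have h1 := heq 0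
    have h2 := heq2 0
    have h3 : deriv k = fun _ => 0 := funext hconst
    rw [h3] at h1 h2
    simp [hΓ, sub_eq_zero] at h1 h2
    rcases h1 with (h | h) | h <;> rw [h] at h2 <;> simp [sub_eq_zero] at h2 <;>
      rcases h2 with h2 | h2 <;> simp_all
  · push Not at hconst
    have hunb : ∀ j : ℕ, ∃ z, (j:ℝ) < ‖k z‖ := by
      by_contra hcon
      push Not at hcon
      obtain ⟨M, hM⟩ := hcon
      have hb : Bornology.IsBounded (Set.range k) :=
        isBounded_iff_forall_norm_le.2 ⟨M, by rintro _ ⟨z, rfl⟩; exact hM z⟩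
      obtain ⟨w, hw⟩ := hconst
      apply hw
      have : k = fun _ => k 0 := funext fun z => hk.apply_eq_apply_of_bounded hb z 0
      rw [this]; simp
    choose z hz using hunb
    let s : ℕ → ℂ → ℂ := fun j w => k (w + z j)
    have hsd : ∀ j, Differentiable ℂ (s j) := fun j => by
      simp only [s]; fun_prop
    have hsder : ∀ j w, deriv (s j) w = deriv k (w + z j) := fun j w =>
      deriv_comp_add_const k (z j) w
    obtain ⟨φ, hφ, hcase⟩ := marty (s := s) isOpen_univ isPreconnected_univ (by
      intro K _ _
      refine ⟨2 * ((‖Γ‖ + 1) * ((1 + ‖a‖) * (1 + ‖b‖) * (1 + ‖c‖))),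
        Eventually.of_forall fun j w _ => ⟨hsd j w, ?_⟩⟩
      rw [← norm_deriv_eq_norm_fderiv, hsder]
      exact ode_bound (heq _) le_rfl)
    rcases hcase with ⟨g, -, hg⟩ | hinf
    · have h1 := (hg.tendsto_at (Set.mem_univ (0:ℂ))).norm
      have h2 : Tendsto (fun j => ‖s (φ j) 0‖) atTop atTop := by
        refine tendsto_atTop_mono (fun j => ?_) (tendsto_natCast_atTop_atTop.comp hφ.tendsto_atTop)
        simpa [s] using (hz (φ j)).le
      exact not_tendsto_nhds_of_tendsto_atTop h2 _ h1
    · refine inf_case (a := a) (b := b) (c := c) (Γ := Γ) (k := fun j => s (φ j))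
        (G := fun _ _ => Γ) (fun j => hsd _)
        (fun j => differentiable_const _) (fun j w => ?_) (fun j => ?_) hΓ tendsto_const_nhds ?_
        (fun M => hinf _ (Set.subset_univ _) (isCompact_closedBall 0 1) M)
      · rw [hsder]; exact heq _
      · obtain ⟨w, hw⟩ := hconst
        refine ⟨w - z (φ j), ?_⟩
        rw [hsder]; simpa using hw
      · simp

/-- Zalcman point-picking. -/
lemma pick {R : ℝ} (hR : 0 < R) {φ : ℂ → ℝ} (hc : ContinuousOn φ (Metric.closedBall 0 R))
    (h0 : 0 < φ 0) :
    ∃ z : ℂ, ‖z‖ < R ∧ R * φ 0 ≤ (R - ‖z‖) * φ z ∧ 0 < φ z ∧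
      ∀ w, ‖w - z‖ ≤ (R - ‖z‖) / 2 → φ w ≤ 2 * φ z := by
  obtain ⟨z, hz, hmax⟩ := (isCompact_closedBall (0:ℂ) R).exists_isMaxOn
    ⟨0, Metric.mem_closedBall_self hR.le⟩
    (f := fun z => (R - ‖z‖) * φ z) ((continuousOn_const.sub continuous_norm.continuousOn).mul hc)
  have h1 : R * φ 0 ≤ (R - ‖z‖) * φ z := by
    have := hmax (Metric.mem_closedBall_self hR.le)
    simpa using this
  have hzR : ‖z‖ ≤ R := by simpa using hz
  have hpos : 0 < (R - ‖z‖) * φ z := lt_of_lt_of_le (by positivity) h1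
  have hlt : 0 < R - ‖z‖ := by
    rcases (sub_nonneg.2 hzR).lt_or_eq with h | h
    · exact h
    · rw [← h] at hpos; simp at hpos
  have hφ : 0 < φ z := (pos_iff_pos_of_mul_pos hpos).1 hlt
  refine ⟨z, by linarith, h1, hφ, fun w hw => ?_⟩
  have hwn : ‖w‖ ≤ ‖z‖ + (R - ‖z‖) / 2 := by
    have := norm_add_le (w - z) z
    simp at this
    linarith
  have hm := hmax (a := w) (by rw [mem_closedBall_zero_iff]; linarith)
  simp only [Set.mem_ofPred_eq] at hm
  rcases le_or_gt (φ w) 0 with hneg | hp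
  · linarith
  · nlinarith

lemma key_seq {a b c : ℂ} (hab : a ≠ b) (hac : a ≠ c) (hbc : b ≠ c)
    {k G : ℕ → ℂ → ℂ} (hk : ∀ j, Differentiable ℂ (k j)) (hG : ∀ j, Differentiable ℂ (G j))
    (heq : ∀ j w, G j w * ((k j w - a) * (k j w - b) * (k j w - c)) = deriv (k j) w ^ 2)
    (hne : ∀ j, ∃ w, deriv (k j) w ≠ 0) (hG0 : ∀ j, ‖G j 0‖ = 1)
    (hG4 : ∀ R : ℝ, ∀ᶠ j in atTop, ∀ w ∈ Metric.closedBall (0:ℂ) R, ‖G j w‖ ≤ 4) : False := by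
  obtain ⟨φ, hφ, hcase⟩ := marty (s := G) isOpen_univ isPreconnected_univ (by
    intro K _ hK
    obtain ⟨R, hR⟩ := hK.isBounded.subset_closedBall 0
    refine ⟨4, ?_⟩
    filter_upwards [hG4 (R + 1)] with j hj z hz
    refine ⟨hG j z, ?_⟩
    rw [← norm_deriv_eq_norm_fderiv]
    have h1 : ‖deriv (G j) z‖ ≤ 4 / 1 :=
      Complex.norm_deriv_le_of_forall_mem_sphere_norm_le one_pos (hG j).diffContOnCl (by
        intro w hw
        apply hj
        have h2 := hR hz
        rw [mem_closedBall_zero_iff] at h2 ⊢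
        rw [mem_sphere_iff_norm] at hw
        have := norm_add_le (w - z) z
        simp at this
        linarith)
    nlinarith [sq_nonneg ‖G j z‖])
  rcases hcase with ⟨Γ, hΓd, hΓ⟩ | hinf
  swap
  · obtain ⟨j, hj⟩ := (hinf {0} (Set.subset_univ _) isCompact_singleton 1).exists
    have := hj 0 rfl
    rw [hG0] at this
    exact lt_irrefl _ this
  have hΓdiff : Differentiable ℂ Γ := fun z => (hΓd z (Set.mem_univ z)).differentiableAt univ_mem
  have hΓ4 : ∀ z, ‖Γ z‖ ≤ 4 := by
    intro z
    refine le_of_tendsto (hΓ.tendsto_at (Set.mem_univ z)).norm ?_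
    filter_upwards [hφ.tendsto_atTop.eventually (hG4 ‖z‖)] with j hj
    exact hj z (by simp)
  have hΓc : Γ = fun _ => Γ 0 := funext fun z => hΓdiff.apply_eq_apply_of_bounded
    (isBounded_iff_forall_norm_le.2 ⟨4, by rintro _ ⟨z, rfl⟩; exact hΓ4 z⟩) z 0
  have hΓ0 : Γ 0 ≠ 0 := by
    have h1 : ‖Γ 0‖ = 1 := by
      refine tendsto_nhds_unique (hΓ.tendsto_at (Set.mem_univ 0)).norm ?_
      simp [hG0]
    intro h
    rw [h] at h1; simp at h1
  have hΓ' := hΓ.deriv (Eventually.of_forall fun j => (hG (φ j)).differentiableOn) isOpen_univ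
  have lG : ∀ w, Tendsto (fun j => G (φ j) w) atTop (𝓝 (Γ 0)) := fun w => by
    have := hΓ.tendsto_at (Set.mem_univ w)
    rwa [hΓc] at this
  have lG' : ∀ w, Tendsto (fun j => deriv (G (φ j)) w) atTop (𝓝 0) := fun w => by
    have := hΓ'.tendsto_at (Set.mem_univ w)
    rw [hΓc] at this
    simpa using this
  obtain ⟨ψ, hψ, hcase⟩ := marty (s := fun j => k (φ j)) isOpen_univ isPreconnected_univ (by
    intro K _ hK
    obtain ⟨R, hR⟩ := hK.isBounded.subset_closedBall 0
    refine ⟨2 * ((4 + 1) * ((1 + ‖a‖) * (1 + ‖b‖) * (1 + ‖c‖))), ?_⟩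
    filter_upwards [hφ.tendsto_atTop.eventually (hG4 R)] with j hj z hz
    refine ⟨hk _ z, ?_⟩
    rw [← norm_deriv_eq_norm_fderiv]
    exact ode_bound (heq _ z) (hj z (hR hz)))
  rcases hcase with ⟨g, hgd, hg⟩ | hinf
  · have hgdiff : Differentiable ℂ g := fun z => (hgd z (Set.mem_univ z)).differentiableAt univ_mem
    have hg1 := hg.deriv (Eventually.of_forall fun j => (hk (φ (ψ j))).differentiableOn) isOpen_univ
    have hg2 := hg1.deriv (Eventually.of_forall fun j =>
      (hk (φ (ψ j))).deriv.differentiableOn) isOpen_univ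
    have l0 : ∀ w, Tendsto (fun j => k (φ (ψ j)) w) atTop (𝓝 (g w)) :=
      fun w => hg.tendsto_at (Set.mem_univ w)
    have l1 : ∀ w, Tendsto (fun j => deriv (k (φ (ψ j))) w) atTop (𝓝 (deriv g w)) :=
      fun w => hg1.tendsto_at (Set.mem_univ w)
    have l2 : ∀ w, Tendsto (fun j => deriv (deriv (k (φ (ψ j)))) w) atTop (𝓝 (deriv (deriv g) w)) :=
      fun w => hg2.tendsto_at (Set.mem_univ w)
    have lG2 : ∀ w, Tendsto (fun j => G (φ (ψ j)) w) atTop (𝓝 (Γ 0)) :=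
      fun w => (lG w).comp hψ.tendsto_atTop
    have lG2' : ∀ w, Tendsto (fun j => deriv (G (φ (ψ j))) w) atTop (𝓝 0) :=
      fun w => (lG' w).comp hψ.tendsto_atTop
    refine no_entire (k := g) (Γ := Γ 0) hab hac hbc hΓ0 hgdiff (fun w => ?_) (fun w => ?_)
    · refine tendsto_nhds_unique ((lG2 w).mul ((((l0 w).sub_const a).mul ((l0 w).sub_const b)).mul
        ((l0 w).sub_const c))) (((l1 w).pow 2).congr fun j => ?_)
      exact (heq _ w).symm
    · have h := tendsto_nhds_unique (((lG2 w).const_mul 2).mul (l2 w))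
        ((((((lG2 w).pow 2).mul ((((l0 w).sub_const b).mul ((l0 w).sub_const c)).add
          (((l0 w).sub_const a).mul ((l0 w).sub_const c)) |>.add
          (((l0 w).sub_const a).mul ((l0 w).sub_const b)))).add ((lG2' w).mul (l1 w)))).congr
          fun j => (ode_second (hk _) (hG _) (heq _) (hne _) w).symm)
      apply mul_left_cancel₀ hΓ0
      linear_combination -h
  · exact inf_case (k := fun j => k (φ (ψ j))) (G := fun j => G (φ (ψ j))) (Γ := Γ 0)
      (fun j => hk _) (fun j => hG _) (fun j w => heq _ w) (fun j => hne _) hΓ0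
      ((lG 0).comp hψ.tendsto_atTop) ((lG' 0).comp hψ.tendsto_atTop)
      (fun M => hinf _ (Set.subset_univ _) (isCompact_closedBall 0 1) M)

/-- Local removability of the quotient at a ramified point. -/
lemma local_germ {h r : ℂ → ℂ} {x a : ℂ} (hh : Differentiable ℂ h) (hr : AnalyticAt ℂ r x)
    (hne : ∃ w, deriv h w ≠ 0) (hx : h x = a) (hx' : deriv h x = 0) (hrx : r x ≠ 0) :
    ∃ g, AnalyticAt ℂ g x ∧ (fun z => deriv h z ^ 2 / ((h z - a) * r z)) =ᶠ[𝓝[≠] x] g := by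
  have hd : Differentiable ℂ (deriv h) := hh.deriv
  have han : AnalyticAt ℂ h x := hh.analyticAt x
  have han' : AnalyticAt ℂ (deriv h) x := hd.analyticAt x
  have hfin : analyticOrderAt (deriv h) x ≠ ⊤ := by
    intro htop
    rw [analyticOrderAt_eq_top] at htop
    have hall : AnalyticOnNhd ℂ (deriv h) Set.univ := fun z _ => hd.analyticAt z
    have := hall.eqOn_zero_of_preconnected_of_eventuallyEq_zero isPreconnected_univ
      (Set.mem_univ x) htop
    obtain ⟨w, hw⟩ := hne
    exact hw (this (Set.mem_univ w))
  obtain ⟨m, hm⟩ := ENat.ne_top_iff_exists.1 hfin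
  have hsum := han.analyticOrderAt_deriv_add_one
  rw [← hm] at hsum
  have hm1 : m ≠ 0 := by
    rintro rfl
    have h0 : analyticOrderAt (deriv h) x = 0 := by rw [← hm]; rfl
    rw [han'.analyticOrderAt_eq_zero] at h0
    exact h0 hx'
  obtain ⟨n, rfl⟩ := Nat.exists_eq_succ_of_ne_zero hm1
  obtain ⟨u, hu, hux, hue⟩ := (han'.analyticOrderAt_eq_natCast).1 hm.symm
  have han2 : AnalyticAt ℂ (fun z => h z - h x) x := han.sub analyticAt_const
  obtain ⟨q, hq, hqx, hqe⟩ := (han2.analyticOrderAt_eq_natCast (n := n.succ + 1)).1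
    (by rw [← hsum]; push_cast; rfl)
  refine ⟨fun z => (z - x) ^ n * u z ^ 2 / (q z * r z), ?_, ?_⟩
  · exact (((analyticAt_id.sub analyticAt_const).pow n).mul (hu.pow 2)).div (hq.mul hr)
      (mul_ne_zero hqx hrx)
  · have hq0 : ∀ᶠ z in 𝓝 x, q z ≠ 0 := hq.continuousAt.eventually_ne hqx
    have hr0 : ∀ᶠ z in 𝓝 x, r z ≠ 0 := hr.continuousAt.eventually_ne hrx
    filter_upwards [hue.filter_mono nhdsWithin_le_nhds, hqe.filter_mono nhdsWithin_le_nhds,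
      hq0.filter_mono nhdsWithin_le_nhds, hr0.filter_mono nhdsWithin_le_nhds,
      self_mem_nhdsWithin] with z h1 h2 h3 h4 h5
    have h6 : z - x ≠ 0 := sub_ne_zero.2 h5
    rw [hx] at h2
    rw [h1, h2]
    simp only [smul_eq_mul, Nat.succ_eq_add_one]
    rw [div_eq_div_iff (mul_ne_zero (mul_ne_zero (pow_ne_zero _ h6) h3) h4) (mul_ne_zero h3 h4)]
    ring

/-- The auxiliary entire function. -/
lemma exists_G {a b c : ℂ} (hab : a ≠ b) (hac : a ≠ c) (hbc : b ≠ c) {h : ℂ → ℂ}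
    (hh : Differentiable ℂ h) (hne : ∃ w, deriv h w ≠ 0)
    (hram : ∀ w, (h w = a ∨ h w = b ∨ h w = c) → deriv h w = 0) :
    ∃ G : ℂ → ℂ, Differentiable ℂ G ∧
      ∀ w, G w * ((h w - a) * (h w - b) * (h w - c)) = deriv h w ^ 2 := by
  let p : ℂ → ℂ := fun w => (h w - a) * (h w - b) * (h w - c)
  let G0 : ℂ → ℂ := fun w => deriv h w ^ 2 / p w
  have hd : Differentiable ℂ (deriv h) := hh.deriv
  have hpd : Differentiable ℂ p := by simp only [p]; fun_prop
  have hmer : MeromorphicOn G0 Set.univ := fun x _ =>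
    ((hd.analyticAt x).pow 2).meromorphicAt.div (hpd.analyticAt x).meromorphicAt
  have hA : ∀ x v, AnalyticAt ℂ (fun z => h z - v) x := fun x v =>
    (hh.analyticAt x).sub analyticAt_const
  have hgerm : ∀ x, ∃ g, AnalyticAt ℂ g x ∧ G0 =ᶠ[𝓝[≠] x] g := by
    intro x
    by_cases ha : h x = a
    · obtain ⟨g, hg, he⟩ := local_germ (r := fun z => (h z - b) * (h z - c)) hh
        ((hA x b).mul (hA x c)) hne ha (hram x (Or.inl ha))
        (by rw [ha]; exact mul_ne_zero (sub_ne_zero.2 hab) (sub_ne_zero.2 hac))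
      refine ⟨g, hg, (EventuallyEq.of_eq ?_).trans he⟩
      funext z; simp only [G0, p]; ring_nf
    by_cases hb : h x = b
    · obtain ⟨g, hg, he⟩ := local_germ (r := fun z => (h z - a) * (h z - c)) hh
        ((hA x a).mul (hA x c)) hne hb (hram x (Or.inr (Or.inl hb)))
        (by rw [hb]; exact mul_ne_zero (sub_ne_zero.2 hab.symm) (sub_ne_zero.2 hbc))
      refine ⟨g, hg, (EventuallyEq.of_eq ?_).trans he⟩
      funext z; simp only [G0, p]; ring_nf
    by_cases hc : h x = c
    · obtain ⟨g, hg, he⟩ := local_germ (r := fun z => (h z - a) * (h z - b)) hh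
        ((hA x a).mul (hA x b)) hne hc (hram x (Or.inr (Or.inr hc)))
        (by rw [hc]; exact mul_ne_zero (sub_ne_zero.2 hac.symm) (sub_ne_zero.2 hbc.symm))
      refine ⟨g, hg, (EventuallyEq.of_eq ?_).trans he⟩
      funext z; simp only [G0, p]; ring_nf
    · refine ⟨G0, ((hd.analyticAt x).pow 2).div (hpd.analyticAt x) ?_, EventuallyEq.rfl⟩
      exact mul_ne_zero (mul_ne_zero (sub_ne_zero.2 ha) (sub_ne_zero.2 hb)) (sub_ne_zero.2 hc)
  let G := toMeromorphicNFOn G0 Set.univ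
  have hGan : ∀ x, AnalyticAt ℂ G x := by
    intro x
    have hNF : MeromorphicNFAt G x :=
      meromorphicNFOn_toMeromorphicNFOn G0 Set.univ (Set.mem_univ x)
    rw [← hNF.meromorphicOrderAt_nonneg_iff_analyticAt,
      meromorphicOrderAt_toMeromorphicNFOn hmer (Set.mem_univ x)]
    obtain ⟨g, hg, he⟩ := hgerm x
    rw [meromorphicOrderAt_congr he]
    exact hg.meromorphicOrderAt_nonneg
  have hpne : ∀ x, ∀ᶠ z in 𝓝[≠] x, p z ≠ 0 := by
    intro x
    rcases (hpd.analyticAt x).eventually_eq_zero_or_eventually_ne_zero with hz | hz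
    · exfalso
      have hall : AnalyticOnNhd ℂ p Set.univ := fun z _ => hpd.analyticAt z
      have h0 := hall.eqOn_zero_of_preconnected_of_eventuallyEq_zero isPreconnected_univ
        (Set.mem_univ x) hz
      obtain ⟨w, hw⟩ := hne
      apply hw
      apply hram
      have := h0 (Set.mem_univ w)
      simpa [p, sub_eq_zero, or_assoc] using this
    · exact hz
  refine ⟨G, fun x => (hGan x).differentiableAt, fun x => ?_⟩
  have h1 : (fun z => G z * p z) =ᶠ[𝓝[≠] x] fun z => deriv h z ^ 2 := by
    have h2 := hmer.toMeromorphicNFOn_eq_self_on_nhdsNE (Set.mem_univ x)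
    filter_upwards [h2, hpne x] with z h3 h4
    have : G z = deriv h z ^ 2 / p z := h3
    rw [this, div_mul_cancel₀ _ h4]
  have c1 : Tendsto (fun z => G z * p z) (𝓝[≠] x) (𝓝 (G x * p x)) :=
    ((hGan x).continuousAt.mul (hpd x).continuousAt).tendsto.mono_left nhdsWithin_le_nhds
  have c2 : Tendsto (fun z => deriv h z ^ 2) (𝓝[≠] x) (𝓝 (deriv h x ^ 2)) :=
    ((hd x).continuousAt.pow 2).tendsto.mono_left nhdsWithin_le_nhds
  exact tendsto_nhds_unique c1 (c2.congr' h1.symm)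

/-- Nevanlinna: a nonconstant entire function has at most two totally ramified finite values. -/
lemma nevanlinna_three {a b c : ℂ} (hab : a ≠ b) (hac : a ≠ c) (hbc : b ≠ c) {h : ℂ → ℂ}
    (hh : Differentiable ℂ h)
    (hram : ∀ w, (h w = a ∨ h w = b ∨ h w = c) → deriv h w = 0) (w0 : ℂ) : deriv h w0 = 0 := by
  by_contra hw0
  obtain ⟨G, hG, heq⟩ := exists_G hab hac hbc hh ⟨w0, hw0⟩ hram
  have hGw0 : G w0 ≠ 0 := by
    intro h0
    have := heq w0
    rw [h0, zero_mul] at this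
    exact hw0 (pow_eq_zero_iff two_ne_zero |>.1 this.symm)
  let φ : ℂ → ℝ := fun z => Real.sqrt ‖G (w0 + z)‖
  have hφc : Continuous φ := by
    have := hG.continuous
    simp only [φ]; fun_prop
  have hφ0 : 0 < φ 0 := by simp [φ, hGw0]
  have hφsq : ∀ z, φ z ^ 2 = ‖G (w0 + z)‖ := fun z => Real.sq_sqrt (norm_nonneg _)
  have hp : ∀ j : ℕ, _ := fun j => pick (R := (j:ℝ) + 1) (by positivity) hφc.continuousOn hφ0
  choose z hzR hz1 hz2 hz3 using hp
  let ρ : ℕ → ℝ := fun j => 1 / φ (z j)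
  have hρ : ∀ j, 0 < ρ j := fun j => one_div_pos.2 (hz2 j)
  have hρφ : ∀ j, ρ j * φ (z j) = 1 := fun j => by simp [ρ, (hz2 j).ne']
  let k : ℕ → ℂ → ℂ := fun j w => h ((ρ j : ℂ) * w + (w0 + z j))
  let Gs : ℕ → ℂ → ℂ := fun j w => (ρ j : ℂ) ^ 2 * G ((ρ j : ℂ) * w + (w0 + z j))
  have hkder : ∀ j w, deriv (k j) w = (ρ j : ℂ) * deriv h ((ρ j : ℂ) * w + (w0 + z j)) := by
    intro j w
    have h1 : HasDerivAt (fun w : ℂ => (ρ j : ℂ) * w + (w0 + z j)) (ρ j : ℂ) w := by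
      simpa using ((hasDerivAt_id w).const_mul (ρ j : ℂ)).add_const (w0 + z j)
    have h2 := ((hh ((ρ j : ℂ) * w + (w0 + z j))).hasDerivAt).comp w h1
    rw [mul_comm]
    exact h2.deriv
  have hnorm : ∀ j w, ‖Gs j w‖ = (ρ j * φ (z j + ρ j * w)) ^ 2 := by
    intro j w
    simp only [Gs]
    rw [norm_mul, norm_pow, Complex.norm_real, Real.norm_of_nonneg (hρ j).le, mul_pow, hφsq]
    congr 3
    ring
  refine key_seq (a := a) (b := b) (c := c) hab hac hbc (k := k) (G := Gs) (fun j => ?_)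
    (fun j => ?_) (fun j w => ?_) (fun j => ?_) (fun j => ?_) (fun R => ?_)
  · simp only [k]; fun_prop
  · simp only [Gs]; fun_prop
  · rw [hkder, mul_pow, ← heq]
    simp only [Gs, k]; ring
  · refine ⟨-(z j) / (ρ j : ℂ), ?_⟩
    have hρ0 : (ρ j : ℂ) ≠ 0 := by exact_mod_cast (hρ j).ne'
    rw [hkder]
    refine mul_ne_zero hρ0 ?_
    have : (ρ j : ℂ) * (-(z j) / (ρ j : ℂ)) + (w0 + z j) = w0 := by field_simp; ring
    rwa [this]
  · rw [hnorm]; simp [hρφ]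
  · have hlim : Tendsto (fun j : ℕ => ((j:ℝ) + 1) * φ 0) atTop atTop :=
      (tendsto_atTop_add_const_right _ _ tendsto_natCast_atTop_atTop).atTop_mul_const hφ0
    filter_upwards [hlim.eventually_ge_atTop (2 * R)] with j hj w hw
    rw [mem_closedBall_zero_iff] at hw
    rw [hnorm]
    have h1 : φ (z j + ρ j * w) ≤ 2 * φ (z j) := by
      apply hz3
      rw [add_sub_cancel_left, norm_mul, Complex.norm_real, Real.norm_of_nonneg (hρ j).le]
      have h2 := (hj.trans (hz1 j))
      have h3 : ρ j * (2 * R) ≤ ρ j * (((j:ℝ) + 1 - ‖z j‖) * φ (z j)) :=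
        mul_le_mul_of_nonneg_left h2 (hρ j).le
      have h4 : ρ j * (((j:ℝ) + 1 - ‖z j‖) * φ (z j)) = (j:ℝ) + 1 - ‖z j‖ := by
        linear_combination ((j:ℝ) + 1 - ‖z j‖) * hρφ j
      have h5 : ρ j * ‖w‖ ≤ ρ j * R := mul_le_mul_of_nonneg_left hw (hρ j).le
      linarith
    have h6 : ρ j * φ (z j + ρ j * w) ≤ 2 := by
      have := mul_le_mul_of_nonneg_left h1 (hρ j).le
      linarith [hρφ j]
    have h7 : 0 ≤ ρ j * φ (z j + ρ j * w) := mul_nonneg (hρ j).le (Real.sqrt_nonneg _)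
    nlinarith

lemma ram_limit {F : ℕ → ℂ → ℂ} {h : ℂ → ℂ} {a w0 : ℂ} {ε : ℕ → ℝ}
    (hF : ∀ᶠ j in atTop, ∀ w ∈ Metric.ball w0 1, DifferentiableAt ℂ (F j) w)
    (hh : Differentiable ℂ h) (hu : TendstoLocallyUniformlyOn F h atTop (Metric.ball w0 1))
    (hε : Tendsto ε atTop (𝓝 0))
    (hr : ∀ᶠ j in atTop, ∀ w ∈ Metric.ball w0 1, F j w = a → ‖deriv (F j) w‖ ≤ ε j)
    (h0 : h w0 = a) : deriv h w0 = 0 := by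
  by_contra hne
  have hm : 0 < ‖deriv h w0‖ := norm_pos_iff.2 hne
  have hu' := hu.deriv (hF.mono fun j hj w hw => (hj w hw).differentiableWithinAt)
    Metric.isOpen_ball
  have e1 : ∀ᶠ w in 𝓝 w0, ‖deriv h w0‖ / 2 < ‖deriv h w‖ :=
    (hh.deriv w0).continuousAt.norm.eventually_const_lt (half_lt_self hm)
  have e2 : ∀ᶠ w in 𝓝 w0, w ≠ w0 → h w ≠ a := by
    have := (hh w0).hasDerivAt.eventually_ne (c := a) hne
    exact eventually_nhdsWithin_iff.1 this
  obtain ⟨δ, hδ, hδs⟩ := Metric.eventually_nhds_iff_ball.1 (e1.and e2)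
  let r := min (δ/2) (1/2)
  have hr0 : 0 < r := by simp only [r]; positivity
  have hr1 : Metric.closedBall w0 r ⊆ Metric.ball w0 δ :=
    Metric.closedBall_subset_ball (lt_of_le_of_lt (min_le_left _ _) (half_lt_self hδ))
  have hr2 : Metric.closedBall w0 r ⊆ Metric.ball w0 1 :=
    Metric.closedBall_subset_ball (lt_of_le_of_lt (min_le_right _ _) (by norm_num))
  have hc := isCompact_closedBall w0 r
  have u0 := (tendstoLocallyUniformlyOn_iff_forall_isCompact Metric.isOpen_ball).1 hu _ hr2 hc
  have u1 := (tendstoLocallyUniformlyOn_iff_forall_isCompact Metric.isOpen_ball).1 hu' _ hr2 hc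
  have hz := hurwitz (F := fun j w => F j w - a) (f := fun w => h w - a) hr0
    (hF.mono fun j hj y hy => (hj y (hr2 hy)).sub_const a)
    (by
      rw [Metric.tendstoUniformlyOn_iff] at u0 ⊢
      simpa using u0)
    (hh.continuous.continuousOn.sub continuousOn_const)
    (fun y hy => by
      refine sub_ne_zero.2 ((hδs y (hr1 (Metric.sphere_subset_closedBall hy))).2 ?_)
      rintro rfl
      rw [mem_sphere_iff_norm, sub_self, norm_zero] at hy
      exact hr0.ne hy)
    (by simp [h0])
  obtain ⟨j, ⟨y, hy, hy0⟩, hj1, hj2, hj3⟩ := (hz.and (hr.and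
    ((Metric.tendstoUniformlyOn_iff.1 u1 (‖deriv h w0‖/4) (by positivity)).and
      (hε.eventually_lt_const (show 0 < ‖deriv h w0‖/4 by positivity))))).exists
  have k1 := hj1 y (hr2 hy) (sub_eq_zero.1 hy0)
  have k2 := hj2 y hy
  have k3 := (hδs y (hr1 hy)).1
  simp only [Function.comp] at k2
  rw [dist_eq_norm] at k2
  have := norm_le_norm_sub_add (deriv h y) (deriv (F j) y)
  linarith

lemma rescaled_false {a b c : ℂ} (hab : a ≠ b) (hac : a ≠ c) (hbc : b ≠ c)
    {k : ℕ → ℂ → ℂ} {ε : ℕ → ℝ} (hε : Tendsto ε atTop (𝓝 0))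
    (hd : ∀ R : ℝ, ∀ᶠ j in atTop, ∀ w ∈ Metric.closedBall (0:ℂ) R,
      DifferentiableAt ℂ (k j) w ∧ ‖deriv (k j) w‖ ≤ 2 * (1 + ‖k j w‖^2))
    (h0 : ∀ j, ‖deriv (k j) 0‖ = 1 + ‖k j 0‖^2)
    (hr : ∀ R : ℝ, ∀ᶠ j in atTop, ∀ w ∈ Metric.closedBall (0:ℂ) R,
      (k j w = a ∨ k j w = b ∨ k j w = c) → ‖deriv (k j) w‖ ≤ ε j) : False := by
  obtain ⟨φ, hφ, hcase⟩ := marty (s := k) isOpen_univ isPreconnected_univ (by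
    intro K _ hK
    obtain ⟨R, hR⟩ := hK.isBounded.subset_closedBall 0
    refine ⟨2, ?_⟩
    filter_upwards [hd R] with j hj z hz
    rw [← norm_deriv_eq_norm_fderiv]
    exact hj z (hR hz))
  rcases hcase with ⟨h, hhd, hh⟩ | hinf
  · have hdiff : Differentiable ℂ h := fun z => (hhd z (Set.mem_univ z)).differentiableAt univ_mem
    have hsub : ∀ w0 : ℂ, Metric.ball w0 1 ⊆ Metric.closedBall 0 (‖w0‖ + 1) := by
      intro w0 w hw
      rw [mem_ball_iff_norm] at hw
      rw [mem_closedBall_zero_iff]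
      have := norm_le_norm_sub_add w w0
      linarith
    have hF : ∀ w0 : ℂ, ∀ᶠ j in atTop, ∀ w ∈ Metric.ball w0 1, DifferentiableAt ℂ (k (φ j)) w := by
      intro w0
      filter_upwards [hφ.tendsto_atTop.eventually (hd (‖w0‖ + 1))] with j hj w hw
      exact (hj w (hsub w0 hw)).1
    have hram : ∀ w, (h w = a ∨ h w = b ∨ h w = c) → deriv h w = 0 := by
      intro w hw
      have key : ∀ v, (v = a ∨ v = b ∨ v = c) → h w = v → deriv h w = 0 := by
        intro v hv hwv
        refine ram_limit (F := fun j => k (φ j)) (ε := fun j => ε (φ j)) (hF w) hdiff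
          (hh.mono (Set.subset_univ _)) (hε.comp hφ.tendsto_atTop) ?_ hwv
        filter_upwards [hφ.tendsto_atTop.eventually (hr (‖w‖ + 1))] with j hj y hy hyv
        exact hj y (hsub w hy) (by rw [hyv]; exact hv)
      exact key _ hw rfl
    have hz := nevanlinna_three hab hac hbc hdiff hram 0
    have hh' := (hh.mono (Set.subset_univ (Metric.ball 0 1))).deriv
      ((hF 0).mono fun j hj w hw => (hj w hw).differentiableWithinAt) Metric.isOpen_ball
    have l1 := (hh'.tendsto_at (Metric.mem_ball_self one_pos)).norm
    rw [hz, norm_zero] at l1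
    obtain ⟨j, hj⟩ := (l1.eventually_lt_const one_pos).exists
    simp only [Function.comp] at hj
    rw [h0] at hj
    nlinarith [sq_nonneg ‖k (φ j) 0‖]
  · obtain ⟨j, hj1, hj2⟩ := ((hinf (Metric.closedBall 0 1) (Set.subset_univ _)
      (isCompact_closedBall _ _) 4).and (hφ.tendsto_atTop.eventually (hd 1))).exists
    have hne : ∀ w ∈ Metric.closedBall (0:ℂ) 1, k (φ j) w ≠ 0 := fun w hw =>
      norm_pos_iff.1 (by linarith [hj1 w hw])
    have m0 : (0:ℂ) ∈ Metric.closedBall (0:ℂ) 1 := by simp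
    have h1 := fderiv_inv_norm (hj2 0 m0).1 (hne 0 m0)
    have h2 : ‖fderiv ℂ (fun y => (k (φ j) y)⁻¹) 0‖ ≤ (1/2) / 1 := by
      apply Complex.norm_fderiv_le_div_of_mapsTo_ball _ _ one_pos
      · intro w hw
        have hw' := Metric.ball_subset_closedBall hw
        exact ((hj2 w hw').1.inv (hne w hw')).differentiableWithinAt
      · intro w hw
        have hw' := Metric.ball_subset_closedBall hw
        rw [mem_closedBall_iff_norm]
        refine (norm_sub_le _ _).trans ?_
        rw [norm_inv, norm_inv]
        have := inv_anti₀ (by norm_num) (hj1 w hw').le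
        have := inv_anti₀ (by norm_num) (hj1 0 m0).le
        linarith
    rw [h1, ← norm_deriv_eq_norm_fderiv, h0, div_one, div_le_iff₀ (by have := hj1 0 m0; positivity)] at h2
    nlinarith [hj1 0 m0]

lemma lappan_disc {r M : ℝ} (hr : 0 < r) {a b c : ℂ} (hab : a ≠ b) (hac : a ≠ c) (hbc : b ≠ c) :
    ∃ C : ℝ, ∀ (U : Set ℂ) (g : ℂ → ℂ), IsOpen U → Metric.closedBall 0 r ⊆ U →
      DifferentiableOn ℂ g U →
      (∀ z ∈ Metric.closedBall (0:ℂ) r, (g z = a ∨ g z = b ∨ g z = c) →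
        ‖deriv g z‖ ≤ M * (1 + ‖g z‖^2)) → ‖deriv g 0‖ ≤ C * (1 + ‖g 0‖^2) := by
  by_contra hcon
  push Not at hcon
  choose U g hU hUr hg hM hbig using fun j : ℕ => hcon ((j:ℝ) + 1)
  let φ : ℕ → ℂ → ℝ := fun j z => ‖deriv (g j) z‖ / (1 + ‖g j z‖^2)
  have hpos : ∀ j z, 0 < 1 + ‖g j z‖^2 := fun j z => by positivity
  have hφd : ∀ j z, φ j z * (1 + ‖g j z‖^2) = ‖deriv (g j) z‖ := fun j z =>
    div_mul_cancel₀ _ (hpos j z).ne'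
  have hφc : ∀ j, ContinuousOn (φ j) (Metric.closedBall 0 r) := by
    intro j
    have c1 := ((hg j).deriv (hU j)).continuousOn.mono (hUr j)
    have c2 := (hg j).continuousOn.mono (hUr j)
    exact c1.norm.div (continuousOn_const.add (c2.norm.pow 2)) fun z _ => (hpos j z).ne'
  have hφ0 : ∀ j : ℕ, (j:ℝ) + 1 < φ j 0 := fun j => (lt_div_iff₀ (hpos j 0)).2 (hbig j)
  have hp : ∀ j : ℕ, _ := fun j => pick (R := r) hr (hφc j) 
    (by have := hφ0 j; have : (0:ℝ) ≤ j := j.cast_nonneg; linarith)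
  choose z hzR hz1 hz2 hz3 using hp
  let ρ : ℕ → ℝ := fun j => 1 / φ j (z j)
  have hρ : ∀ j, 0 < ρ j := fun j => one_div_pos.2 (hz2 j)
  have hρφ : ∀ j, ρ j * φ j (z j) = 1 := fun j => by simp [ρ, (hz2 j).ne']
  have hbig2 : ∀ j : ℕ, (j:ℝ) + 1 ≤ φ j (z j) := by
    intro j
    have h1 := hz1 j
    have h2 : (r - ‖z j‖) * φ j (z j) ≤ r * φ j (z j) :=
      mul_le_mul_of_nonneg_right (by linarith [norm_nonneg (z j)]) (hz2 j).le
    have h3 := le_of_mul_le_mul_left (h1.trans h2) hr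
    linarith [hφ0 j]
  have hρ0 : Tendsto ρ atTop (𝓝 0) := by
    refine squeeze_zero (fun j => (hρ j).le) (fun j => ?_) tendsto_one_div_add_atTop_nhds_zero_nat
    exact one_div_le_one_div_of_le (by positivity) (hbig2 j)
  let k : ℕ → ℂ → ℂ := fun j w => g j ((ρ j : ℂ) * w + z j)
  have hin : ∀ R : ℝ, ∀ᶠ j in atTop, ∀ w ∈ Metric.closedBall (0:ℂ) R,
      ‖((ρ j : ℂ) * w + z j) - z j‖ ≤ (r - ‖z j‖)/2 := by
    intro R
    have hlim : Tendsto (fun j : ℕ => r * ((j:ℝ) + 1)) atTop atTop :=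
      (tendsto_atTop_add_const_right _ _ tendsto_natCast_atTop_atTop).const_mul_atTop hr
    filter_upwards [hlim.eventually_ge_atTop (2 * R)] with j hj w hw
    rw [mem_closedBall_zero_iff] at hw
    rw [add_sub_cancel_right, norm_mul, Complex.norm_real, Real.norm_of_nonneg (hρ j).le]
    have h2 : 2 * R ≤ (r - ‖z j‖) * φ j (z j) :=
      hj.trans ((mul_le_mul_of_nonneg_left (hφ0 j).le hr.le).trans (hz1 j))
    have h3 : ρ j * (2 * R) ≤ ρ j * ((r - ‖z j‖) * φ j (z j)) :=
      mul_le_mul_of_nonneg_left h2 (hρ j).le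
    have h4 : ρ j * ((r - ‖z j‖) * φ j (z j)) = r - ‖z j‖ := by
      linear_combination (r - ‖z j‖) * hρφ j
    have h5 : ρ j * ‖w‖ ≤ ρ j * R := mul_le_mul_of_nonneg_left hw (hρ j).le
    linarith
  have hinr : ∀ j x, ‖x - z j‖ ≤ (r - ‖z j‖)/2 → x ∈ Metric.closedBall (0:ℂ) r := by
    intro j x hx
    rw [mem_closedBall_zero_iff]
    have := norm_le_norm_sub_add x (z j)
    linarith [hzR j]
  have hgd : ∀ j, ∀ x ∈ Metric.closedBall (0:ℂ) r, DifferentiableAt ℂ (g j) x := fun j x hx =>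
    (hg j x (hUr j hx)).differentiableAt ((hU j).mem_nhds (hUr j hx))
  have hkder : ∀ j w, (ρ j : ℂ) * w + z j ∈ Metric.closedBall (0:ℂ) r → 
      HasDerivAt (k j) ((ρ j : ℂ) * deriv (g j) ((ρ j : ℂ) * w + z j)) w := by
    intro j w hw
    have h1 : HasDerivAt (fun w : ℂ => (ρ j : ℂ) * w + z j) (ρ j : ℂ) w := by
      simpa using ((hasDerivAt_id w).const_mul (ρ j : ℂ)).add_const (z j)
    have h2 := ((hgd j _ hw).hasDerivAt).comp w h1
    rw [mul_comm]
    exact h2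
  have hkn : ∀ j w, (ρ j : ℂ) * w + z j ∈ Metric.closedBall (0:ℂ) r → 
      ‖deriv (k j) w‖ = ρ j * ‖deriv (g j) ((ρ j : ℂ) * w + z j)‖ := by
    intro j w hw
    rw [(hkder j w hw).deriv, norm_mul, Complex.norm_real, Real.norm_of_nonneg (hρ j).le]
  let A : ℝ := |M| * (1 + ‖a‖^2 + ‖b‖^2 + ‖c‖^2)
  refine rescaled_false hab hac hbc (k := k) (ε := fun j => ρ j * A) 
    (by simpa using hρ0.mul_const A) (fun R => ?_) (fun j => ?_) (fun R => ?_)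
  · filter_upwards [hin R] with j hj w hw
    have hx := hinr j _ (hj w hw)
    refine ⟨(hkder j w hx).differentiableAt, ?_⟩
    rw [hkn j w hx, ← hφd]
    have h1 := hz3 j _ (hj w hw)
    have h2 : ρ j * φ j ((ρ j : ℂ) * w + z j) ≤ 2 := by
      have := mul_le_mul_of_nonneg_left h1 (hρ j).le
      have := hρφ j
      linarith
    rw [← mul_assoc]
    exact mul_le_mul_of_nonneg_right h2 (hpos _ _).le
  · have hx : (ρ j : ℂ) * 0 + z j ∈ Metric.closedBall (0:ℂ) r := by
      simpa using (hzR j).le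
    rw [hkn j 0 hx, ← hφd, ← mul_assoc]
    simp [k, hρφ]
  · filter_upwards [hin R] with j hj w hw hv
    have hx := hinr j _ (hj w hw)
    rw [hkn j w hx]
    refine mul_le_mul_of_nonneg_left ((hM j _ hx hv).trans ?_) (hρ j).le
    refine (mul_le_mul_of_nonneg_right (le_abs_self M) (hpos _ _).le).trans ?_
    refine mul_le_mul_of_nonneg_left ?_ (abs_nonneg M)
    have ha := sq_nonneg ‖a‖
    have hb := sq_nonneg ‖b‖
    have hc := sq_nonneg ‖c‖
    simp only [k] at hv
    rcases hv with hv | hv | hv <;> rw [hv] <;> linarith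

lemma chordal_le_dist (a b : ℂ) : chordal a b ≤ dist a b := by
  unfold chordal
  have h1 : ∀ x : ℂ, 1 ≤ Real.sqrt (1 + ‖x‖^2) := fun x =>
    Real.one_le_sqrt.2 (by nlinarith [sq_nonneg ‖x‖])
  apply div_le_self dist_nonneg
  nlinarith [h1 a, h1 b]

lemma bound_of_chordal {B : ℝ} (hB : 0 ≤ B) : ∃ ε > 0, ∀ a b : ℂ, ‖b‖ ≤ B → chordal a b < ε →
    ‖a‖ ≤ 2 * B + 1 := by
  refine ⟨1 / (4 * (1 + B)), by positivity, fun a b hb hab => ?_⟩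
  by_contra hcon
  push Not at hcon
  unfold chordal at hab
  have hs : ∀ x : ℂ, Real.sqrt (1 + ‖x‖^2) ≤ 1 + ‖x‖ := fun x => by
    rw [Real.sqrt_le_left (by positivity)]
    nlinarith [norm_nonneg x]
  have hp : ∀ x : ℂ, 0 < Real.sqrt (1 + ‖x‖^2) := fun x => Real.sqrt_pos.2 (by positivity)
  rw [div_lt_div_iff₀ (mul_pos (hp a) (hp b)) (by positivity)] at hab
  have h1 : ‖a‖ - B ≤ dist a b := by
    rw [dist_eq_norm]
    linarith [norm_sub_norm_le a b]
  have h2 : Real.sqrt (1 + ‖a‖^2) * Real.sqrt (1 + ‖b‖^2) ≤ (1 + ‖a‖) * (1 + B) :=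
    mul_le_mul (hs a) ((hs b).trans (by linarith)) (hp b).le (by positivity)
  have h3 : (‖a‖ - B) * (4 * (1 + B)) ≤ dist a b * (4 * (1 + B)) :=
    mul_le_mul_of_nonneg_right h1 (by positivity)
  have h4 : ((‖a‖ - B) * 4 - (1 + ‖a‖)) * (1 + B) < 0 := by nlinarith
  have h5 : 0 ≤ (‖a‖ - B) * 4 - (1 + ‖a‖) := by linarith
  have := mul_nonneg h5 (by linarith : 0 ≤ 1 + B)
  linarith

lemma backward {n : ℕ} {Ω : Set (Cn n)} (hΩ : IsOpen Ω) (hconn : IsConnected Ω)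
    (F : Set (Cn n → ℂ)) (hhol : ∀ f ∈ F, DifferentiableOn ℂ f Ω)
    (H : ∀ K, K ⊆ Ω → IsCompact K → ∃ E : Set ℂ, ∃ M : ℝ, 0 < M ∧
        (∃ a b c : ℂ, a ∈ E ∧ b ∈ E ∧ c ∈ E ∧ a ≠ b ∧ a ≠ c ∧ b ≠ c) ∧
        ∀ f ∈ F, ∀ z ∈ K, f z ∈ E → sphDeriv f z ≤ M) : IsNormalFamily Ω F := by
  intro s hs
  have hda : ∀ j, ∀ z ∈ Ω, DifferentiableAt ℂ (s j) z := fun j z hz =>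
    (hhol _ (hs j) z hz).differentiableAt (hΩ.mem_nhds hz)
  obtain ⟨φ, hφ, hcase⟩ := marty (s := s) hΩ hconn.isPreconnected (by
    intro K hKΩ hK
    obtain ⟨r, hr, hrΩ⟩ := hK.exists_cthickening_subset_open hΩ hKΩ
    obtain ⟨E, M, hM, ⟨a, b, c, ha, hb, hc, hab, hac, hbc⟩, hE⟩ := H _ hrΩ hK.cthickening
    obtain ⟨C, hC⟩ := lappan_disc (r := r) (M := M) hr hab hac hbc
    refine ⟨C, Eventually.of_forall fun j z hz => ⟨hda j z (hKΩ hz), ?_⟩⟩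
    have key : ∀ v : Cn n, ‖v‖ ≤ 1 → ‖fderiv ℂ (s j) z v‖ ≤ C * (1 + ‖s j z‖^2) := by
      intro v hv
      let l : ℂ → Cn n := fun ζ => z + ζ • v
      have hl : ∀ ζ, HasDerivAt l v ζ := fun ζ => by
        have h := ((hasDerivAt_id ζ).smul_const v).const_add z
        rw [one_smul] at h
        exact h
      have hlc : Continuous l := by simp only [l]; fun_prop
      have hg : ∀ ζ, l ζ ∈ Ω → HasDerivAt (fun ζ => s j (l ζ)) (fderiv ℂ (s j) (l ζ) v) ζ :=
        fun ζ hζ => (hda j _ hζ).hasFDerivAt.comp_hasDerivAt ζ (hl ζ)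
      have hmem : ∀ ζ ∈ Metric.closedBall (0:ℂ) r, l ζ ∈ Metric.cthickening r K := by
        intro ζ hζ
        refine Metric.mem_cthickening_of_dist_le _ z _ _ hz ?_
        rw [mem_closedBall_zero_iff] at hζ
        simp only [l, dist_eq_norm, add_sub_cancel_left, norm_smul]
        nlinarith [norm_nonneg ζ, norm_nonneg v]
      have h1 := hC (l ⁻¹' Ω) (fun ζ => s j (l ζ)) (hΩ.preimage hlc)
        (fun ζ hζ => hrΩ (hmem ζ hζ))
        (fun ζ hζ => (hg ζ hζ).differentiableAt.differentiableWithinAt)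
        (fun ζ hζ hv' => by
          have hm := hmem ζ hζ
          have h2 : s j (l ζ) ∈ E := by rcases hv' with h | h | h <;> rw [h] <;> assumption
          have h3 := hE _ (hs j) _ hm h2
          unfold sphDeriv at h3
          rw [div_le_iff₀ (by positivity)] at h3
          rw [(hg ζ (hrΩ hm)).deriv]
          refine ((fderiv ℂ (s j) (l ζ)).le_opNorm v).trans ?_
          exact (mul_le_of_le_one_right (norm_nonneg _) hv).trans h3)
      have hl0 : l 0 = z := by simp [l]
      rw [(hg 0 (by rw [hl0]; exact hKΩ hz)).deriv, hl0] at h1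
      exact h1
    have hC0 : 0 ≤ C * (1 + ‖s j z‖^2) := (norm_nonneg _).trans (key 0 (by simp))
    exact ContinuousLinearMap.opNorm_le_of_unit_norm hC0 fun v hv => key v hv.le)
  refine ⟨φ, hφ, ?_⟩
  rcases hcase with ⟨g, hgd, hg⟩ | hinf
  · left
    refine ⟨g, hgd, fun K hKΩ hK ε hε => ?_⟩
    have hu := (tendstoLocallyUniformlyOn_iff_forall_isCompact hΩ).1 hg K hKΩ hK
    obtain ⟨N, hN⟩ := eventually_atTop.1 (Metric.tendstoUniformlyOn_iff.1 hu ε hε)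
    refine ⟨N, fun j hj z hz => (chordal_le_dist _ _).trans_lt ?_⟩
    rw [dist_comm]
    exact hN j hj z hz
  · right
    intro K hKΩ hK M
    exact eventually_atTop.1 (hinf K hKΩ hK M)

lemma fwd_bound {E : Type} [NormedAddCommGroup E] [NormedSpace ℂ E] {u : E → ℂ} {z : E} {r B : ℝ}
    (hr : 0 < r) (hd : ∀ w ∈ Metric.ball z r, DifferentiableAt ℂ u w)
    (hB : ∀ w ∈ Metric.ball z r, ‖u w‖ ≤ B) : ‖fderiv ℂ u z‖ ≤ 2 * B / r := by
  apply Complex.norm_fderiv_le_div_of_mapsTo_ball _ _ hr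
  · exact fun w hw => (hd w hw).differentiableWithinAt
  · intro w hw
    rw [mem_closedBall_iff_norm]
    have := norm_sub_le (u w) (u z)
    linarith [hB w hw, hB z (Metric.mem_ball_self hr)]

lemma forward {n : ℕ} {Ω : Set (Cn n)} (hΩ : IsOpen Ω)
    (F : Set (Cn n → ℂ)) (hhol : ∀ f ∈ F, DifferentiableOn ℂ f Ω) (H : IsNormalFamily Ω F)
    {K : Set (Cn n)} (hKΩ : K ⊆ Ω) (hK : IsCompact K) :
    ∃ M : ℝ, 0 < M ∧ ∀ f ∈ F, ∀ z ∈ K, sphDeriv f z ≤ M := by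
  by_contra hcon
  push Not at hcon
  choose s hs z hz hbig using fun j : ℕ => hcon ((j:ℝ) + 1) (by positivity)
  obtain ⟨r, hr, hrΩ⟩ := hK.exists_cthickening_subset_open hΩ hKΩ
  obtain ⟨φ, hφ, hcase⟩ := H s hs
  have hda : ∀ j, ∀ z ∈ Ω, DifferentiableAt ℂ (s j) z := fun j z hz =>
    (hhol _ (hs j) z hz).differentiableAt (hΩ.mem_nhds hz)
  have hK' : IsCompact (Metric.cthickening r K) := hK.cthickening
  have hsub : ∀ j, Metric.ball (z j) r ⊆ Metric.cthickening r K := fun j w hw =>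
    Metric.mem_cthickening_of_dist_le _ _ _ _ (hz j) (Metric.mem_ball.1 hw).le
  have hfin : ∀ C : ℝ, ∃ N, ∀ j ≥ N, C < sphDeriv (s (φ j)) (z (φ j)) := by
    intro C
    obtain ⟨N, hN⟩ := exists_nat_gt C
    refine ⟨N, fun j hj => ?_⟩
    have h1 := hbig (φ j)
    have h2 : (N:ℝ) ≤ φ j := by exact_mod_cast hj.trans (hφ.id_le j)
    linarith
  rcases hcase with ⟨g, hgd, hg⟩ | hinf
  · obtain ⟨B, hB⟩ := hK'.exists_bound_of_continuousOn (hgd.continuousOn.mono hrΩ)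
    obtain ⟨ε, hε, hb⟩ := bound_of_chordal (B := |B|) (abs_nonneg B)
    obtain ⟨N1, hN1⟩ := hg _ hrΩ hK' ε hε
    obtain ⟨N2, hN2⟩ := hfin (2 * (2 * |B| + 1) / r)
    let j := max N1 N2
    have h1 := hN2 j (le_max_right _ _)
    have h2 := fwd_bound (u := s (φ j)) (z := z (φ j)) (B := 2 * |B| + 1) hr
      (fun w hw => hda _ _ (hrΩ (hsub _ hw)))
      (fun w hw => hb _ _ ((hB w (hsub _ hw)).trans (le_abs_self B))
        (hN1 j (le_max_left _ _) w (hsub _ hw)))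
    have h3 : sphDeriv (s (φ j)) (z (φ j)) ≤ ‖fderiv ℂ (s (φ j)) (z (φ j))‖ :=
      div_le_self (norm_nonneg _) (by nlinarith [sq_nonneg ‖s (φ j) (z (φ j))‖])
    linarith
  · obtain ⟨N1, hN1⟩ := hinf _ hrΩ hK' 1
    obtain ⟨N2, hN2⟩ := hfin (2 * 1 / r)
    let j := max N1 N2
    have h1 := hN2 j (le_max_right _ _)
    have hgt : ∀ w ∈ Metric.ball (z (φ j)) r, 1 < ‖s (φ j) w‖ := fun w hw =>
      hN1 j (le_max_left _ _) w (hsub _ hw)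
    have hne : ∀ w ∈ Metric.ball (z (φ j)) r, s (φ j) w ≠ 0 := fun w hw =>
      norm_pos_iff.1 (one_pos.trans (hgt w hw))
    have hdw : ∀ w ∈ Metric.ball (z (φ j)) r, DifferentiableAt ℂ (s (φ j)) w := fun w hw =>
      hda _ _ (hrΩ (hsub _ hw))
    have h2 := fwd_bound (u := fun w => (s (φ j) w)⁻¹) (z := z (φ j)) (B := 1) hr
      (fun w hw => (hdw w hw).inv (hne w hw))
      (fun w hw => by rw [norm_inv]; exact inv_le_one_of_one_le₀ (hgt w hw).le)
    have m0 := Metric.mem_ball_self (x := z (φ j)) hr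
    rw [fderiv_inv_norm (hdw _ m0) (hne _ m0)] at h2
    have h3 : sphDeriv (s (φ j)) (z (φ j)) ≤
        ‖fderiv ℂ (s (φ j)) (z (φ j))‖ / ‖s (φ j) (z (φ j))‖^2 := by
      unfold sphDeriv
      have := hgt _ m0
      exact div_le_div_of_nonneg_left (norm_nonneg _) (by positivity) (by linarith)
    linarith

/-- Lappan-type normality criterion in ℂⁿ. -/
theorem stmt13 {n : ℕ} {Ω : Set (Cn n)} (hΩ : IsOpen Ω) (hconn : IsConnected Ω)
    (F : Set (Cn n → ℂ)) (hhol : ∀ f ∈ F, DifferentiableOn ℂ f Ω) :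
    IsNormalFamily Ω F ↔
      ∀ K, K ⊆ Ω → IsCompact K → ∃ E : Set ℂ, ∃ M : ℝ, 0 < M ∧
        (∃ a b c : ℂ, a ∈ E ∧ b ∈ E ∧ c ∈ E ∧ a ≠ b ∧ a ≠ c ∧ b ≠ c) ∧
        ∀ f ∈ F, ∀ z ∈ K, f z ∈ E → sphDeriv f z ≤ M := by
  refine ⟨fun H K hKΩ hK => ?_, backward hΩ hconn F hhol⟩
  obtain ⟨M, hM, h⟩ := forward hΩ F hhol H hKΩ hK
  refine ⟨Set.univ, M, hM, ⟨0, 1, 2, trivial, trivial, trivial, ?_, ?_, ?_⟩,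
    fun f hf z hz _ => h f hf z hz⟩ <;> norm_num
end

section
/- Zalcman rescaling lemma in ℂⁿ (contrapositive use): if a family 𝓕 of holomorphic functions on a domain Ω ⊆ ℂⁿ is not normal at a point z₀ ∈ Ω, then there exist functions f_j ∈ 𝓕, points z_j → z₀, and positive numbers ρ_j → 0 such that the rescaled functions g_j(ζ) = f_j(z_j + ρ_j ζ) converge uniformly on compact subsets of ℂⁿ to a nonconstant entire function g satisfying g^♯(ζ) ≤ g^♯(0) = 1 for all ζ ∈ ℂⁿ. -/
open Filter Topology

open Metric Set in
lemma exists_log_ball (v : ℂ → ℂ) (R : ℝ) (hR : 0 < R) (hv : DifferentiableOn ℂ v (ball 0 R))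
    (h0 : ∀ t ∈ ball (0:ℂ) R, v t ≠ 0) :
    ∃ h : ℂ → ℂ, DifferentiableOn ℂ h (ball 0 R) ∧ h 0 = Complex.log (v 0) ∧
      ∀ t ∈ ball (0:ℂ) R, Complex.exp (h t) = v t := by
  have hdv : DifferentiableOn ℂ (deriv v) (ball 0 R) := hv.deriv isOpen_ball
  obtain ⟨h, hh0, hh⟩ := ((hdv.div hv h0).isExactOn_ball).with_val_at 0 (Complex.log (v 0))
  refine ⟨h, fun t ht => (hh t ht).differentiableAt.differentiableWithinAt, hh0, ?_⟩
  have hder : ∀ t ∈ ball (0:ℂ) R, HasDerivAt (fun t => Complex.exp (- h t) * v t) 0 t := by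
    intro t ht
    have h1 := (hh t ht).neg.cexp
    have h2 := ((hv t ht).differentiableAt (isOpen_ball.mem_nhds ht)).hasDerivAt
    refine (h1.mul h2).congr_deriv ?_
    have := h0 t ht
    simp only [Pi.div_apply, Pi.neg_apply]
    field_simp
    ring
  intro t ht
  have h00 : (0:ℂ) ∈ ball (0:ℂ) R := by simpa using hR
  have hc := (convex_ball (0:ℂ) R).is_const_of_fderivWithin_eq_zero (𝕜 := ℂ)
    (f := fun t => Complex.exp (- h t) * v t)
    (fun t ht => (hder t ht).differentiableAt.differentiableWithinAt)
    (fun t ht => by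
      rw [fderivWithin_of_isOpen isOpen_ball ht]
      have := (hder t ht).hasFDerivAt.fderiv
      rw [this]; ext; simp) ht h00
  simp only [hh0, Complex.exp_neg, Complex.exp_log (h0 0 h00)] at hc
  rw [inv_mul_cancel₀ (h0 0 h00)] at hc
  have := Complex.exp_ne_zero (h t)
  field_simp at hc
  exact hc.symm

open Metric Set in
lemma harnack_disc (a : ℝ) (ha : 0 < a) : ∃ c > 0, ∀ v : ℂ → ℂ,
    DifferentiableOn ℂ v (ball 0 3) → (∀ t ∈ ball (0:ℂ) 3, v t ≠ 0) →
    (∀ t ∈ ball (0:ℂ) 3, ‖v t‖ ≤ 1) → a ≤ ‖v 0‖ → c ≤ ‖v 1‖ := by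
  refine ⟨Real.exp (-(1 + 2 * (-Real.log a + Real.pi))), Real.exp_pos _, ?_⟩
  intro v hv hne hle hav
  obtain ⟨h, hd, hh0, hexp⟩ := exists_log_ball v 3 (by norm_num) hv hne
  have h1 : (1:ℂ) ∈ ball (0:ℂ) 3 := by simp
  have h00 : (0:ℂ) ∈ ball (0:ℂ) 3 := by simp
  have hb := Complex.borelCaratheodory (M := 1) (R := 3) (f := h) (z := 1) one_pos hd
    (fun t ht => by
      have h2 := hle t ht
      rw [← hexp t ht, Complex.norm_exp] at h2
      have : (h t).re ≤ 0 := by simpa using h2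
      show (h t).re ≤ 1
      linarith) (by norm_num) h1
  have h0n : ‖h 0‖ ≤ -Real.log a + Real.pi := by
    rw [hh0]
    refine (Complex.norm_le_abs_re_add_abs_im _).trans ?_
    rw [Complex.log_re, Complex.log_im]
    have := Complex.abs_arg_le_pi (v 0)
    have h3 : Real.log ‖v 0‖ ≤ 0 := Real.log_nonpos (norm_nonneg _) (hle 0 h00)
    have h4 : Real.log a ≤ Real.log ‖v 0‖ := Real.log_le_log ha hav
    rw [abs_of_nonpos h3]
    linarith
  rw [← hexp 1 h1, Complex.norm_exp]
  apply Real.exp_le_exp.2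
  have h5 := (abs_le.1 (Complex.abs_re_le_norm (h 1))).1
  norm_num at hb
  linarith

open Metric Set in
lemma phi_lip {E : Type} [NormedAddCommGroup E] [NormedSpace ℂ E] (f : E → ℂ) (p : E) (r M : ℝ)
    (hf : DifferentiableOn ℂ f (ball p r)) (hM : ∀ z ∈ ball p r, sphDeriv f z ≤ M)
    {x y : E} (hx : x ∈ ball p r) (hy : y ∈ ball p r) :
    |(1 + ‖f y‖^2)⁻¹ - (1 + ‖f x‖^2)⁻¹| ≤ M * ‖y - x‖ := by
  have key : ∀ z ∈ ball p r, ∃ L : E →L[ℝ] ℝ,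
      HasFDerivAt (fun z => (1 + ‖f z‖^2)⁻¹) L z ∧ ‖L‖ ≤ M := by
    intro z hz
    have h1 := ((hf z hz).differentiableAt (isOpen_ball.mem_nhds hz)).hasFDerivAt.restrictScalars ℝ
    have h2 := h1.norm_sq.const_add 1
    have hpos : 0 < 1 + ‖f z‖^2 := by positivity
    have h3 := (hasDerivAt_inv hpos.ne').comp_hasFDerivAt z h2
    refine ⟨_, h3, ?_⟩
    refine ContinuousLinearMap.opNorm_le_bound _ ((div_nonneg (norm_nonneg _) (by positivity)).trans (hM z hz)) ?_
    intro w
    have h4 : |inner ℝ (f z) (fderiv ℂ f z w)| ≤ ‖f z‖ * (‖fderiv ℂ f z‖ * ‖w‖) :=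
      (abs_real_inner_le_norm _ _).trans (by gcongr; exact (fderiv ℂ f z).le_opNorm w)
    have h5 := hM z hz
    rw [sphDeriv, div_le_iff₀ hpos] at h5
    simp only [smul_apply, ContinuousLinearMap.comp_apply, innerSL_apply_apply,
      ContinuousLinearMap.coe_restrictScalars', smul_eq_mul, nsmul_eq_mul, Real.norm_eq_abs, abs_mul, abs_neg, abs_inv]
    rw [abs_of_nonneg (by positivity : (0:ℝ) ≤ (1 + ‖f z‖^2)^2), inv_mul_le_iff₀ (by positivity)]
    have h6 : 2 * ‖f z‖ ≤ 1 + ‖f z‖^2 := by nlinarith [sq_nonneg (‖f z‖ - 1)]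
    simp only [Nat.cast_ofNat, abs_two]
    calc 2 * |inner ℝ (f z) (fderiv ℂ f z w)| ≤ 2 * (‖f z‖ * (‖fderiv ℂ f z‖ * ‖w‖)) := by gcongr
      _ = (2 * ‖f z‖) * (‖fderiv ℂ f z‖ * ‖w‖) := by ring
      _ ≤ (1 + ‖f z‖^2) * ((M * (1 + ‖f z‖^2)) * ‖w‖) := by gcongr
      _ = _ := by ring
  choose! L hL hLM using key
  exact (convex_ball p r).norm_image_sub_le_of_norm_hasFDerivWithin_le
    (fun z hz => (hL z hz).hasFDerivWithinAt) hLM hx hy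

open Metric Set in
lemma spread {E : Type} [NormedAddCommGroup E] [NormedSpace ℂ E] (M r₀ : ℝ) (hM : 0 < M)
    (hr₀ : 0 < r₀) : ∃ δ > 0, δ ≤ r₀ ∧ ∀ A : ℝ, ∃ B : ℝ, 0 < B ∧ ∀ (f : E → ℂ) (q : E),
      DifferentiableOn ℂ f (ball q (6 * δ)) → (∀ z ∈ ball q (6 * δ), sphDeriv f z ≤ M) →
      ‖f q‖ ≤ A → ∀ p ∈ closedBall q δ, ‖f p‖ ≤ B := by
  refine ⟨min (1 / (16 * M)) r₀, by positivity, min_le_right _ _, ?_⟩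
  set δ := min (1 / (16 * M)) r₀ with hδ
  have hδ0 : 0 < δ := by positivity
  have hMδ : M * (4 * δ) ≤ 1 / 4 := by
    calc M * (4 * δ) ≤ M * (4 * (1 / (16 * M))) := by gcongr; exact min_le_left _ _
      _ = 1 / 4 := by field_simp; norm_num
  intro A
  obtain ⟨c, hc, H⟩ := harnack_disc (1 / (2 * (|A| + 1))) (by positivity)
  refine ⟨1 + 1 / (2 * c), by positivity, ?_⟩
  intro f q hf hfM hA p hp
  have hc2 : 0 < 1 / (2 * c) := by positivity
  by_contra hlt
  push Not at hlt
  have hpq : ‖p - q‖ ≤ δ := by simpa [dist_eq_norm] using hp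
  have hsub : ball p (4 * δ) ⊆ ball q (6 * δ) := by
    intro z hz
    have := dist_triangle z p q
    simp only [mem_ball, mem_closedBall] at *
    linarith
  have hbig : ∀ z ∈ ball p (4 * δ), 1 / 2 ≤ ‖f z‖ := by
    intro z hz
    have h1 := phi_lip f p (4 * δ) M (hf.mono hsub) (fun z hz => hfM z (hsub hz))
      (mem_ball_self (by positivity)) hz
    have h2 : ‖z - p‖ ≤ 4 * δ := by simpa [dist_eq_norm] using (mem_ball.1 hz).le
    have h3 : M * ‖z - p‖ ≤ 1 / 4 := le_trans (by gcongr) hMδ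
    have h4 : (1 + ‖f p‖^2)⁻¹ ≤ 1 / 2 := by
      rw [inv_le_comm₀ (by positivity) (by norm_num)]
      have : 1 ≤ ‖f p‖ := by linarith
      norm_num
      nlinarith
    have h5 : (1 + ‖f z‖^2)⁻¹ ≤ 3 / 4 := by linarith [(abs_le.1 h1).2]
    rw [inv_le_comm₀ (by positivity) (by norm_num)] at h5
    norm_num at h5
    nlinarith [norm_nonneg (f z)]
  have hmap : ∀ t ∈ ball (0:ℂ) 3, q + t • (p - q) ∈ ball p (4 * δ) := by
    intro t ht
    have ht : ‖t‖ < 3 := by simpa using ht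
    have : q + t • (p - q) - p = t • (p - q) - (p - q) := by abel
    rw [mem_ball, dist_eq_norm, this]
    refine (norm_sub_le _ _).trans_lt ?_
    rw [norm_smul]
    have : ‖t‖ * ‖p - q‖ ≤ ‖t‖ * δ := by gcongr
    have : ‖t‖ * δ < 3 * δ := by gcongr
    linarith
  have hne : ∀ t ∈ ball (0:ℂ) 3, f (q + t • (p - q)) ≠ 0 := by
    intro t ht h0
    have := hbig _ (hmap t ht)
    rw [h0] at this
    norm_num at this
  have := H (fun t => (2 * f (q + t • (p - q)))⁻¹) ?_ ?_ ?_ ?_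
  · simp only [one_smul, add_sub_cancel, norm_inv, norm_mul, Complex.norm_ofNat] at this
    rw [le_inv_comm₀ hc (by linarith)] at this
    have h1 : 1 / (2 * c) = c⁻¹ / 2 := by field_simp
    linarith
  · have h1 : DifferentiableOn ℂ (fun t : ℂ => f (q + t • (p - q))) (ball 0 3) :=
      (hf.mono hsub).comp (by fun_prop) hmap
    exact (h1.const_mul 2).inv (fun t ht => mul_ne_zero two_ne_zero (hne t ht))
  · intro t ht
    exact inv_ne_zero (mul_ne_zero two_ne_zero (hne t ht))
  · intro t ht
    have := hbig _ (hmap t ht)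
    simp only [norm_inv, norm_mul, Complex.norm_ofNat]
    apply inv_le_one_of_one_le₀
    linarith
  · have h1 : f q ≠ 0 := by simpa using hne 0 (by simp)
    have h2 := norm_pos_iff.2 h1
    simp only [zero_smul, add_zero, norm_inv, norm_mul, Complex.norm_ofNat]
    rw [one_div]
    gcongr
    linarith [le_abs_self A]

open Metric Set in
lemma fderiv_bound {E : Type} [NormedAddCommGroup E] [NormedSpace ℂ E] (f : E → ℂ) (y : E) (r B : ℝ)
    (hr : 0 < r) (hf : DifferentiableOn ℂ f (ball y r)) (hB : ∀ z ∈ ball y r, ‖f z‖ ≤ B) :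
    ‖fderiv ℂ f y‖ ≤ 2 * B / r := by
  refine Complex.norm_fderiv_le_div_of_mapsTo_ball hf ?_ hr
  intro z hz
  rw [mem_closedBall, dist_eq_norm]
  have h1 := hB z hz
  have h2 := hB y (mem_ball_self hr)
  exact (norm_sub_le _ _).trans (by linarith)

open Metric Set in
lemma lip_bound {E : Type} [NormedAddCommGroup E] [NormedSpace ℂ E] (f : E → ℂ) (x : E) (r B : ℝ)
    (hf : DifferentiableOn ℂ f (ball x r)) (hB : ∀ z ∈ ball x r, ‖f z‖ ≤ B)
    {y y' : E} (hy : y ∈ ball x (r / 4)) (hy' : y' ∈ ball x (r / 4)) :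
    ‖f y - f y'‖ ≤ 4 * B / r * dist y y' := by
  have hr : 0 < r / 4 := pos_of_mem_ball hy
  have hsub : ball y' (r / 2) ⊆ ball x r := by
    apply ball_subset_ball'
    have := mem_ball.1 hy'
    linarith
  have hyy : y ∈ ball y' (r / 2) := by
    have := dist_triangle_right y y' x
    rw [mem_ball] at *
    linarith
  have := Complex.dist_le_div_mul_dist_of_mapsTo_ball (R₂ := 2 * B) (hf.mono hsub) (fun z hz => by
    rw [mem_closedBall, dist_eq_norm]
    have h1 := hB z (hsub hz)
    have h2 := hB y' (hsub (mem_ball_self (by linarith)))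
    exact (norm_sub_le _ _).trans (by linarith)) hyy
  rw [dist_eq_norm] at this
  refine this.trans (le_of_eq ?_)
  have : r ≠ 0 := by linarith
  field_simp
  ring

open Metric Set in
lemma diag_subseq {E : Type} (s : ℕ → E → ℂ) (d : ℕ → E) (P : Set E)
    (h : ∀ x ∈ P, ∃ B : ℝ, ∃ N : ℕ, ∀ j ≥ N, ‖s j x‖ ≤ B) :
    ∃ φ : ℕ → ℕ, StrictMono φ ∧ ∀ k, d k ∈ P → ∃ l : ℂ, Tendsto (fun j => s (φ j) (d k)) atTop (𝓝 l) := by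
  classical
  let X : ℕ → ℕ → ℂ := fun j k => if d k ∈ P then s j (d k) else 0
  have hb : ∀ k, ∃ B : ℝ, ∀ j, ‖X j k‖ ≤ B := by
    intro k
    by_cases hk : d k ∈ P
    · obtain ⟨B, N, hN⟩ := h _ hk
      refine ⟨|B| + ∑ i ∈ Finset.range N, ‖X i k‖, fun j => ?_⟩
      have hs : 0 ≤ ∑ i ∈ Finset.range N, ‖X i k‖ := Finset.sum_nonneg fun _ _ => norm_nonneg _
      by_cases hj : N ≤ j
      · have h1 : ‖X j k‖ ≤ B := by simpa [X, hk] using hN j hj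
        linarith [le_abs_self B]
      · have h1 := Finset.single_le_sum (f := fun i => ‖X i k‖) (fun _ _ => norm_nonneg _)
          (Finset.mem_range.2 (not_le.1 hj))
        have := abs_nonneg B
        linarith
    · exact ⟨0, fun j => by simp [X, hk]⟩
  choose B hB using hb
  have hc : IsCompact (Set.pi Set.univ fun k => closedBall (0:ℂ) (B k)) :=
    isCompact_univ_pi fun k => isCompact_closedBall _ _
  obtain ⟨a, -, φ, hφ, hlim⟩ := hc.tendsto_subseq (x := X) (fun j k _ => by simpa using hB k j)
  refine ⟨φ, hφ, fun k hk => ⟨a k, ?_⟩⟩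
  have := (tendsto_pi_nhds.1 hlim) k
  simpa [X, hk] using this

open Metric Set in
lemma montel {E : Type} [NormedAddCommGroup E] [NormedSpace ℂ E] [ProperSpace E] (U : Set E)
    (hU : IsOpen U) (s : ℕ → E → ℂ)
    (h : ∀ x ∈ U, ∃ r > 0, ∃ B : ℝ, ∃ N : ℕ, ∀ j ≥ N, DifferentiableOn ℂ (s j) (ball x r) ∧
      ∀ y ∈ ball x r, ‖s j y‖ ≤ B) :
    ∃ φ : ℕ → ℕ, StrictMono φ ∧ ∃ g : E → ℂ, DifferentiableOn ℂ g U ∧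
      (∀ K, K ⊆ U → IsCompact K → ∀ ε > 0, ∃ N, ∀ j ≥ N, ∀ z ∈ K, ‖s (φ j) z - g z‖ < ε) ∧
      ∀ x ∈ U, Tendsto (fun j => fderiv ℂ (s (φ j)) x) atTop (𝓝 (fderiv ℂ g x)) := by
  let d : ℕ → E := TopologicalSpace.denseSeq E
  obtain ⟨φ, hφ, hd⟩ := diag_subseq s d U (fun x hx => by
    obtain ⟨r, hr, B, N, hN⟩ := h x hx
    exact ⟨B, N, fun j hj => (hN j hj).2 x (mem_ball_self hr)⟩)
  refine ⟨φ, hφ, ?_⟩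
  let t : ℕ → E → ℂ := fun j => s (φ j)
  have ht : ∀ x ∈ U, ∃ r > 0, ball x r ⊆ U ∧ ∃ B : ℝ, 0 ≤ B ∧ ∃ N : ℕ, ∀ j ≥ N,
      DifferentiableOn ℂ (t j) (ball x r) ∧ ∀ y ∈ ball x r, ‖t j y‖ ≤ B := by
    intro x hx
    obtain ⟨r, hr, B, N, hN⟩ := h x hx
    obtain ⟨r', hr', hsub⟩ := Metric.isOpen_iff.1 hU x hx
    refine ⟨min r r', lt_min hr hr', (ball_subset_ball (min_le_right _ _)).trans hsub, |B|,
      abs_nonneg B, N, fun j hj => ?_⟩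
    have h1 := hN (φ j) (hj.trans (hφ.id_le j))
    have h2 : ball x (min r r') ⊆ ball x r := ball_subset_ball (min_le_left _ _)
    exact ⟨h1.1.mono h2, fun y hy => (h1.2 y (h2 hy)).trans (le_abs_self B)⟩
  -- pointwise convergence
  have hpt : ∀ x ∈ U, ∃ l : ℂ, Tendsto (fun j => t j x) atTop (𝓝 l) := by
    intro x hx
    apply cauchySeq_tendsto_of_complete
    obtain ⟨r, hr, hsub, B, hB0, N, hN⟩ := ht x hx
    rw [Metric.cauchySeq_iff]
    intro ε hε
    set L := 4 * B / r with hL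
    have hL0 : 0 ≤ L := by positivity
    obtain ⟨k, hk⟩ := (TopologicalSpace.denseRange_denseSeq E).exists_dist_lt x
      (ε := min (r / 4) (ε / (3 * (L + 1)))) (by positivity)
    have hk1 : d k ∈ ball x (r / 4) := by
      rw [mem_ball, dist_comm]; exact hk.trans_le (min_le_left _ _)
    have hk2 : L * dist x (d k) ≤ ε / 3 := by
      have : dist x (d k) ≤ ε / (3 * (L + 1)) := (hk.trans_le (min_le_right _ _)).le
      calc L * dist x (d k) ≤ (L + 1) * (ε / (3 * (L + 1))) := by gcongr; linarith
        _ = ε / 3 := by field_simp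
    have hkU : d k ∈ U := hsub (ball_subset_ball (by linarith) hk1)
    obtain ⟨l, hl⟩ := hd k hkU
    obtain ⟨N', hN'⟩ := Metric.cauchySeq_iff.1 hl.cauchySeq (ε / 3) (by positivity)
    refine ⟨max N N', fun i hi j hj => ?_⟩
    have hxx : x ∈ ball x (r / 4) := mem_ball_self (by positivity)
    have hNi := hN i ((le_max_left _ _).trans hi)
    have hNj := hN j ((le_max_left _ _).trans hj)
    have h1 := lip_bound (t i) x r B hNi.1 hNi.2 hxx hk1
    have h2 := lip_bound (t j) x r B hNj.1 hNj.2 hxx hk1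
    have h3 := hN' i ((le_max_right _ _).trans hi) j ((le_max_right _ _).trans hj)
    have h4 : dist (t i x) (t j x) ≤ dist (t i x) (t i (d k)) + dist (t i (d k)) (t j (d k))
      + dist (t j (d k)) (t j x) := dist_triangle4 _ _ _ _
    rw [dist_comm (t j (d k)), dist_eq_norm (t i x) (t i (d k)), dist_eq_norm (t j x)] at h4
    have h3' : dist (t i (d k)) (t j (d k)) < ε / 3 := h3
    linarith
  choose! g hg using hpt
  -- local uniform Cauchy
  have hloc : ∀ x ∈ U, ∃ ρ > 0, ball x ρ ⊆ U ∧ (∃ N, ∀ j ≥ N, DifferentiableOn ℂ (t j) (ball x ρ)) ∧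
      ∀ ε > 0, ∃ N, ∀ i ≥ N, ∀ j ≥ N, ∀ y ∈ ball x ρ, ‖t i y - t j y‖ ≤ ε := by
    intro x hx
    obtain ⟨r, hr, hsub, B, hB0, N, hN⟩ := ht x hx
    have h84 : closedBall x (r / 8) ⊆ ball x (r / 4) := closedBall_subset_ball (by linarith)
    have h8r : ball x (r / 8) ⊆ ball x r := ball_subset_ball (by linarith)
    have h4r : ball x (r / 4) ⊆ ball x r := ball_subset_ball (by linarith)
    refine ⟨r / 8, by positivity, h8r.trans hsub, ⟨N, fun j hj => (hN j hj).1.mono h8r⟩, ?_⟩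
    intro ε hε
    set L := 4 * B / r with hL
    have hL0 : 0 ≤ L := by positivity
    obtain ⟨T, hT, hTf, hcov⟩ := (isCompact_closedBall x (r / 8)).finite_cover_balls
      (e := ε / (3 * (L + 1))) (by positivity)
    have hev : ∀ c ∈ T, ∀ᶠ M in atTop, ∀ i ≥ M, ∀ j ≥ M, dist (t i c) (t j c) < ε / 3 := by
      intro c hc
      obtain ⟨M, hM⟩ := Metric.cauchySeq_iff.1 (hg c (hsub (h4r (h84 (hT hc))))).cauchySeq (ε / 3)
        (by positivity)
      filter_upwards [eventually_ge_atTop M] with M' hM' i hi j hj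
      exact hM i (hM'.trans hi) j (hM'.trans hj)
    obtain ⟨M, hM, hMN⟩ := (((Filter.eventually_all_finite hTf).2 hev).and
      (eventually_ge_atTop N)).exists
    refine ⟨M, fun i hi j hj y hy => ?_⟩
    obtain ⟨c, hc, hyc⟩ := mem_iUnion₂.1 (hcov (ball_subset_closedBall hy))
    have hy4 := h84 (ball_subset_closedBall hy)
    have hc4 := h84 (hT hc)
    have hNi := hN i (hMN.trans hi)
    have hNj := hN j (hMN.trans hj)
    have h1 := lip_bound (t i) x r B hNi.1 hNi.2 hy4 hc4
    have h2 := lip_bound (t j) x r B hNj.1 hNj.2 hy4 hc4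
    have h3 := hM c hc i hi j hj
    have hk2 : L * dist y c ≤ ε / 3 := by
      have : dist y c ≤ ε / (3 * (L + 1)) := (mem_ball.1 hyc).le
      calc L * dist y c ≤ (L + 1) * (ε / (3 * (L + 1))) := by gcongr; linarith
        _ = ε / 3 := by field_simp
    have h4 : dist (t i y) (t j y) ≤ dist (t i y) (t i c) + dist (t i c) (t j c)
      + dist (t j c) (t j y) := dist_triangle4 _ _ _ _
    rw [dist_comm (t j c), dist_eq_norm (t i y) (t i c), dist_eq_norm (t j y)] at h4
    rw [← dist_eq_norm]
    linarith
  -- uniform convergence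
  have hlu : ∀ x ∈ U, ∃ ρ > 0, ∀ ε > 0, ∃ N, ∀ i ≥ N, ∀ y ∈ ball x ρ, ‖t i y - g y‖ ≤ ε := by
    intro x hx
    obtain ⟨ρ, hρ, hsub, -, hC⟩ := hloc x hx
    refine ⟨ρ, hρ, fun ε hε => ?_⟩
    obtain ⟨N, hN⟩ := hC ε hε
    refine ⟨N, fun i hi y hy => ?_⟩
    have hl := ((hg y (hsub hy)).const_sub (t i y)).norm
    refine le_of_tendsto hl ?_
    filter_upwards [eventually_ge_atTop N] with j hj
    exact hN i hi j hj y hy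
  -- derivatives
  have hder : ∀ x ∈ U, ∃ ρ > 0, ball x ρ ⊆ U ∧ (∃ N, ∀ j ≥ N, DifferentiableOn ℂ (t j) (ball x ρ)) ∧
      ∀ ε > 0, ∃ N, ∀ i ≥ N, ∀ j ≥ N, ∀ y ∈ ball x ρ,
        ‖fderiv ℂ (t i) y - fderiv ℂ (t j) y‖ ≤ ε := by
    intro x hx
    obtain ⟨ρ, hρ, hsub, ⟨N, hN⟩, hC⟩ := hloc x hx
    have h2 : ball x (ρ / 2) ⊆ ball x ρ := ball_subset_ball (by linarith)
    refine ⟨ρ / 2, by positivity, h2.trans hsub, ⟨N, fun j hj => (hN j hj).mono h2⟩, ?_⟩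
    intro ε hε
    obtain ⟨N', hN'⟩ := hC (ε * ρ / 4) (by positivity)
    refine ⟨max N N', fun i hi j hj y hy => ?_⟩
    have hyb : ball y (ρ / 2) ⊆ ball x ρ := by
      apply ball_subset_ball'
      have := mem_ball.1 hy
      linarith
    have hdi := hN i ((le_max_left _ _).trans hi)
    have hdj := hN j ((le_max_left _ _).trans hj)
    have hyn := isOpen_ball.mem_nhds (h2 hy)
    have := fderiv_bound (t i - t j) y (ρ / 2) (ε * ρ / 4) (by positivity)
      ((hdi.sub hdj).mono hyb) (fun z hz => hN' i ((le_max_right _ _).trans hi) j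
        ((le_max_right _ _).trans hj) z (hyb hz))
    rw [fderiv_sub (hdi.differentiableAt hyn) (hdj.differentiableAt hyn)] at this
    refine this.trans (le_of_eq ?_)
    field_simp
    ring
  have hdpt : ∀ x ∈ U, ∃ l, Tendsto (fun j => fderiv ℂ (t j) x) atTop (𝓝 l) := by
    intro x hx
    apply cauchySeq_tendsto_of_complete
    obtain ⟨ρ, hρ, hsub, -, hC⟩ := hder x hx
    rw [Metric.cauchySeq_iff]
    intro ε hε
    obtain ⟨N, hN⟩ := hC (ε / 2) (by positivity)
    refine ⟨N, fun i hi j hj => ?_⟩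
    rw [dist_eq_norm]
    have := hN i hi j hj x (mem_ball_self hρ)
    linarith
  choose! g' hg' using hdpt
  have hgd : ∀ x ∈ U, HasFDerivAt g (g' x) x := by
    intro x hx
    obtain ⟨ρ, hρ, hsub, ⟨N, hN⟩, hC⟩ := hder x hx
    refine hasFDerivAt_of_tendstoUniformlyOnFilter (l := atTop) (f := t)
      (f' := fun j y => fderiv ℂ (t j) y) (g' := g') ?_ ?_ ?_
    · rw [Metric.tendstoUniformlyOnFilter_iff]
      intro ε hε
      obtain ⟨M, hM⟩ := hC (ε / 2) (by positivity)
      filter_upwards [prod_mem_prod (Ici_mem_atTop M) (ball_mem_nhds x hρ)] with p hp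
      obtain ⟨hp1, hp2⟩ := hp
      have hl := ((hg' p.2 (hsub hp2)).const_sub (fderiv ℂ (t p.1) p.2)).norm
      have : ‖fderiv ℂ (t p.1) p.2 - g' p.2‖ ≤ ε / 2 := by
        refine le_of_tendsto hl ?_
        filter_upwards [eventually_ge_atTop M] with j hj
        exact hM p.1 hp1 j hj p.2 hp2
      rw [dist_comm, dist_eq_norm]
      linarith
    · filter_upwards [prod_mem_prod (Ici_mem_atTop N) (ball_mem_nhds x hρ)] with p hp
      exact ((hN p.1 hp.1).differentiableAt (isOpen_ball.mem_nhds hp.2)).hasFDerivAt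
    · filter_upwards [ball_mem_nhds x hρ] with y hy
      exact hg y (hsub hy)
  refine ⟨g, fun x hx => (hgd x hx).differentiableAt.differentiableWithinAt, ?_, fun x hx => ?_⟩
  · intro K hK hKc ε hε
    choose! ρ hρ hρN using hlu
    obtain ⟨T, hT, hcov⟩ := hKc.elim_nhds_subcover (fun x => ball x (ρ x))
      (fun x hx => ball_mem_nhds x (hρ x (hK hx)))
    have hev : ∀ c ∈ T, ∀ᶠ M in atTop, ∀ i ≥ M, ∀ y ∈ ball c (ρ c), ‖t i y - g y‖ ≤ ε / 2 := by
      intro c hc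
      obtain ⟨M, hM⟩ := hρN c (hK (hT c hc)) (ε / 2) (by positivity)
      filter_upwards [eventually_ge_atTop M] with M' hM' i hi
      exact hM i (hM'.trans hi)
    obtain ⟨M, hM⟩ := ((Filter.eventually_all_finset T).2 hev).exists
    refine ⟨M, fun j hj z hz => ?_⟩
    obtain ⟨c, hc, hzc⟩ := mem_iUnion₂.1 (hcov hz)
    have : ‖t j z - g z‖ ≤ ε / 2 := hM c hc j hj z hzc
    show ‖t j z - g z‖ < ε
    linarith
  · rw [(hgd x hx).fderiv]
    exact hg' x hx

lemma chordal_le (a b : ℂ) : chordal a b ≤ ‖a - b‖ := by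
  unfold chordal
  rw [dist_eq_norm]
  apply div_le_self (norm_nonneg _)
  have h1 : ∀ c : ℂ, 1 ≤ Real.sqrt (1 + ‖c‖^2) := fun c => by
    rw [Real.one_le_sqrt]; nlinarith [norm_nonneg c]
  nlinarith [h1 a, h1 b]

open Metric Set in
lemma marty_s14 {E : Type} [NormedAddCommGroup E] [NormedSpace ℂ E] [ProperSpace E] (F : Set (E → ℂ))
    (z₀ : E) (r M : ℝ) (hr : 0 < r) (hM : 0 < M)
    (hF : ∀ f ∈ F, DifferentiableOn ℂ f (ball z₀ r)) (hs : ∀ f ∈ F, ∀ z ∈ ball z₀ r, sphDeriv f z ≤ M) :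
    ∃ δ > 0, δ ≤ r ∧ IsNormalFamily (ball z₀ δ) F := by
  obtain ⟨δ, hδ, hδr, H⟩ := spread (E := E) M (r / 7) hM (by positivity)
  refine ⟨δ, hδ, by linarith, ?_⟩
  have H' : ∀ A : ℝ, ∃ B : ℝ, 0 < B ∧ ∀ f ∈ F, ∀ q ∈ ball z₀ δ, ‖f q‖ ≤ A →
      ∀ p ∈ closedBall q δ, ‖f p‖ ≤ B := by
    intro A
    obtain ⟨B, hB, hB'⟩ := H A
    refine ⟨B, hB, fun f hf q hq => ?_⟩
    have hsub : ball q (6 * δ) ⊆ ball z₀ r := by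
      apply ball_subset_ball'
      have := mem_ball.1 hq
      linarith
    exact hB' f q ((hF f hf).mono hsub) (fun z hz => hs f hf z (hsub hz))
  intro s hsF
  by_cases hcase : ∃ A : ℝ, ∃ᶠ j in atTop, ‖s j z₀‖ ≤ A
  · obtain ⟨A, hA⟩ := hcase
    obtain ⟨φ, hφ, hφA⟩ := Filter.extraction_of_frequently_atTop hA
    obtain ⟨B, hB, hB'⟩ := H' A
    obtain ⟨ψ, hψ, g, hg, hconv, -⟩ := montel (ball z₀ δ) isOpen_ball (fun j => s (φ j)) (by
      intro x hx
      obtain ⟨ε, hε, hsub⟩ := Metric.isOpen_iff.1 isOpen_ball x hx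
      refine ⟨ε, hε, B, 0, fun j _ => ⟨(hF _ (hsF _)).mono (hsub.trans (ball_subset_ball (by linarith))),
        fun y hy => ?_⟩⟩
      exact hB' _ (hsF _) z₀ (mem_ball_self hδ) (hφA j) y (ball_subset_closedBall (hsub hy)))
    refine ⟨φ ∘ ψ, hφ.comp hψ, Or.inl ⟨g, hg, ?_⟩⟩
    intro K hK hKc ε hε
    obtain ⟨N, hN⟩ := hconv K hK hKc ε hε
    exact ⟨N, fun j hj z hz => (chordal_le _ _).trans_lt (hN j hj z hz)⟩
  · push Not at hcase
    refine ⟨id, strictMono_id, Or.inr ?_⟩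
    intro K hK _ A
    obtain ⟨B, hB, hB'⟩ := H' A
    obtain ⟨N, hN⟩ := eventually_atTop.1 (hcase B)
    refine ⟨N, fun j hj z hz => ?_⟩
    by_contra hle
    push Not at hle
    have := hB' _ (hsF j) z (hK hz) hle z₀ (by
      rw [mem_closedBall, dist_comm]; exact (mem_ball.1 (hK hz)).le)
    have h2 := hN j hj
    linarith

lemma sphDeriv_rescale {E : Type} [NormedAddCommGroup E] [NormedSpace ℂ E] (f : E → ℂ) (z : E) (ρ : ℝ)
    (hρ : 0 < ρ) (ζ : E) (hf : DifferentiableAt ℂ f (z + (ρ : ℂ) • ζ)) :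
    sphDeriv (fun ζ => f (z + (ρ : ℂ) • ζ)) ζ = ρ * sphDeriv f (z + (ρ : ℂ) • ζ) := by
  unfold sphDeriv
  have h1 : HasFDerivAt (fun ζ : E => z + (ρ : ℂ) • ζ) ((ρ : ℂ) • ContinuousLinearMap.id ℂ E) ζ :=
    ((hasFDerivAt_id ζ).const_smul (ρ : ℂ)).const_add z
  have h2 := hf.hasFDerivAt.comp ζ h1
  have h3 : fderiv ℂ (fun ζ => f (z + (ρ : ℂ) • ζ)) ζ = (ρ : ℂ) • fderiv ℂ f (z + (ρ : ℂ) • ζ) := by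
    refine h2.fderiv.trans ?_
    ext w; simp
  rw [h3, norm_smul, Complex.norm_real, Real.norm_of_nonneg hρ.le, mul_div_assoc]

open Metric Set in
lemma zalcman_step {E : Type} [NormedAddCommGroup E] [NormedSpace ℂ E] [ProperSpace E]
    (f : E → ℂ) (z₀ w : E) (r m : ℝ) (hr : 0 < r) (hm : 1 ≤ m)
    (hf : DifferentiableOn ℂ f (closedBall z₀ (2 * r))) (hw : w ∈ ball z₀ (r / 2))
    (hbig : 4 * m / r ≤ sphDeriv f w) :
    ∃ z ∈ ball z₀ r, ∃ ρ > 0, ρ ≤ r / m ∧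
      DifferentiableOn ℂ (fun ζ => f (z + (ρ : ℂ) • ζ)) (ball 0 m) ∧
      sphDeriv (fun ζ => f (z + (ρ : ℂ) • ζ)) 0 = 1 ∧
      ∀ ζ ∈ ball (0 : E) m, sphDeriv (fun ζ => f (z + (ρ : ℂ) • ζ)) ζ * (m / (m + 1)) * (1 - ‖ζ‖ / m) ≤ 1 := by
  have hm0 : 0 < m := by linarith
  have hsn : ∀ z, 0 ≤ sphDeriv f z := fun z => div_nonneg (norm_nonneg _) (by positivity)
  have hda : ∀ z ∈ ball z₀ r, DifferentiableAt ℂ f z := fun z hz =>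
    hf.differentiableAt (mem_of_superset (isOpen_ball.mem_nhds hz)
      (ball_subset_closedBall.trans (closedBall_subset_closedBall (by linarith))))
  obtain ⟨B, hB⟩ := (isCompact_closedBall z₀ (2 * r)).exists_bound_of_continuousOn hf.continuousOn
  let h : E → ℝ := fun z => (r - ‖z - z₀‖) * sphDeriv f z
  have hbd : ∀ z ∈ ball z₀ r, h z ≤ r * (2 * B / r) := by
    intro z hz
    have hz' : ‖z - z₀‖ < r := by rwa [mem_ball, dist_eq_norm] at hz
    have hsub : ball z r ⊆ closedBall z₀ (2 * r) := by
      refine (ball_subset_ball' ?_).trans ball_subset_closedBall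
      have := mem_ball.1 hz
      linarith
    have h1 := fderiv_bound f z r B hr (hf.mono hsub) (fun y hy => hB y (hsub hy))
    have h2 : sphDeriv f z ≤ ‖fderiv ℂ f z‖ := div_le_self (norm_nonneg _) (by nlinarith [norm_nonneg (f z)])
    have h3 := norm_nonneg (z - z₀)
    have h4 := hsn z
    calc h z ≤ r * sphDeriv f z := by
          show (r - ‖z - z₀‖) * sphDeriv f z ≤ _
          gcongr; linarith
      _ ≤ _ := by gcongr; exact h2.trans h1
  have hwr : w ∈ ball z₀ r := ball_subset_ball (by linarith) hw
  set S := sSup (h '' ball z₀ r) with hS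
  have hbdd : BddAbove (h '' ball z₀ r) := ⟨_, by rintro _ ⟨z, hz, rfl⟩; exact hbd z hz⟩
  have hleS : ∀ z ∈ ball z₀ r, h z ≤ S := fun z hz => le_csSup hbdd (mem_image_of_mem h hz)
  have hS2 : 2 * m ≤ S := by
    refine le_trans ?_ (hleS w hwr)
    have hw' : ‖w - z₀‖ < r / 2 := by rwa [mem_ball, dist_eq_norm] at hw
    calc 2 * m = (r / 2) * (4 * m / r) := by field_simp; norm_num
      _ ≤ (r - ‖w - z₀‖) * sphDeriv f w := by
        gcongr
        · linarith
        · linarith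
  have hlam : m / (m + 1) < 1 := by rw [div_lt_one (by linarith)]; linarith
  have hlam2 : 1 / 2 ≤ m / (m + 1) := by rw [div_le_div_iff₀ (by norm_num) (by linarith)]; linarith
  obtain ⟨_, ⟨z, hz, rfl⟩, hzS⟩ := exists_lt_of_lt_csSup (Set.Nonempty.image h ⟨w, hwr⟩)
    (show m / (m + 1) * S < sSup (h '' ball z₀ r) by rw [← hS]; nlinarith)
  have hhm : m ≤ h z := by nlinarith
  have hz' : ‖z - z₀‖ < r := by rwa [mem_ball, dist_eq_norm] at hz
  have hsp : 0 < sphDeriv f z := by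
    rcases (hsn z).lt_or_eq with h1 | h1
    · exact h1
    · have : h z = 0 := by show (r - ‖z - z₀‖) * sphDeriv f z = 0; rw [← h1, mul_zero]
      linarith
  set ρ := (sphDeriv f z)⁻¹ with hρ
  have hρ0 : 0 < ρ := inv_pos.2 hsp
  have hρh : ρ * h z = r - ‖z - z₀‖ := by
    show ρ * ((r - ‖z - z₀‖) * sphDeriv f z) = _
    rw [hρ]; field_simp
  have hin : ∀ ζ ∈ ball (0 : E) m, ρ * (h z - ‖ζ‖) ≤ r - ‖z + (ρ : ℂ) • ζ - z₀‖ := by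
    intro ζ hζ
    have h1 : ‖z + (ρ : ℂ) • ζ - z₀‖ ≤ ‖z - z₀‖ + ρ * ‖ζ‖ := by
      rw [show z + (ρ : ℂ) • ζ - z₀ = (z - z₀) + (ρ : ℂ) • ζ by abel]
      refine (norm_add_le _ _).trans ?_
      rw [norm_smul, Complex.norm_real, Real.norm_of_nonneg hρ0.le]
    rw [mul_sub, hρh]
    linarith
  have hin2 : ∀ ζ ∈ ball (0 : E) m, z + (ρ : ℂ) • ζ ∈ ball z₀ r := by
    intro ζ hζ
    have h1 := hin ζ hζ
    have h2 : ‖ζ‖ < m := by simpa using hζ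
    have h3 : 0 < ρ * (h z - ‖ζ‖) := mul_pos hρ0 (by linarith)
    rw [mem_ball, dist_eq_norm]
    linarith
  have h0m : (0 : E) ∈ ball (0 : E) m := mem_ball_self hm0
  refine ⟨z, hz, ρ, hρ0, ?_, ?_, ?_, ?_⟩
  · rw [le_div_iff₀ hm0]
    have := norm_nonneg (z - z₀)
    nlinarith
  · intro ζ hζ
    have h1 : DifferentiableAt ℂ (fun ζ : E => z + (ρ : ℂ) • ζ) ζ := by fun_prop
    exact ((hda _ (hin2 ζ hζ)).comp ζ h1).differentiableWithinAt
  · rw [sphDeriv_rescale f z ρ hρ0 0 (hda _ (hin2 0 h0m))]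
    simp only [smul_zero, add_zero]
    rw [hρ]
    exact inv_mul_cancel₀ hsp.ne'
  · intro ζ hζ
    rw [sphDeriv_rescale f z ρ hρ0 ζ (hda _ (hin2 ζ hζ))]
    set p := z + (ρ : ℂ) • ζ with hp
    have h1 := hin ζ hζ
    have h2 : ‖ζ‖ < m := by simpa using hζ
    have h3 : (r - ‖p - z₀‖) * sphDeriv f p ≤ S := hleS p (hin2 ζ hζ)
    have h4 : ρ * (h z - ‖ζ‖) * sphDeriv f p ≤ S :=
      le_trans (mul_le_mul_of_nonneg_right h1 (hsn p)) h3
    have hhz : 0 < h z := by linarith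
    have h5 : 1 - ‖ζ‖ / m ≤ (h z - ‖ζ‖) / h z := by
      rw [sub_div, div_self hhz.ne']
      gcongr
    have h6 : 0 ≤ ρ * sphDeriv f p * (m / (m + 1)) :=
      mul_nonneg (mul_nonneg hρ0.le (hsn p)) (by linarith)
    calc ρ * sphDeriv f p * (m / (m + 1)) * (1 - ‖ζ‖ / m)
        ≤ ρ * sphDeriv f p * (m / (m + 1)) * ((h z - ‖ζ‖) / h z) := by gcongr
      _ = (m / (m + 1)) * (ρ * (h z - ‖ζ‖) * sphDeriv f p) / h z := by ring
      _ ≤ (m / (m + 1)) * S / h z := by gcongr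
      _ ≤ 1 := by rw [div_le_one hhz]; exact hzS.le

open Metric Set in
lemma bound_zero {E : Type} [NormedAddCommGroup E] [NormedSpace ℂ E] :
    ∃ δ > 0, (∃ A : ℝ, ∀ g : E → ℂ, DifferentiableOn ℂ g (ball 0 (7 * δ)) →
      (∀ z ∈ ball (0 : E) (7 * δ), sphDeriv g z ≤ 4) → sphDeriv g 0 = 1 → ‖g 0‖ ≤ A) ∧
      ∀ (k : ℕ) (A : ℝ), ∃ B : ℝ, ∀ g : E → ℂ, DifferentiableOn ℂ g (ball 0 ((k + 7) * δ)) →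
      (∀ z ∈ ball (0 : E) ((k + 7) * δ), sphDeriv g z ≤ 4) → ‖g 0‖ ≤ A →
      ∀ p ∈ closedBall (0 : E) (k * δ), ‖g p‖ ≤ B := by
  obtain ⟨δ, hδ, -, H⟩ := spread (E := E) 4 1 (by norm_num) one_pos
  refine ⟨δ, hδ, ?_, ?_⟩
  · obtain ⟨B, hB, HB⟩ := H (4 / δ)
    refine ⟨B, fun g hg hs h1 => ?_⟩
    by_contra hlt
    push Not at hlt
    have hbig : ∀ q ∈ ball (0 : E) δ, 4 / δ < ‖g q‖ := by
      intro q hq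
      by_contra hle
      push Not at hle
      have hsub : ball q (6 * δ) ⊆ ball 0 (7 * δ) := by
        apply ball_subset_ball'
        have := mem_ball.1 hq
        linarith
      have := HB g q (hg.mono hsub) (fun z hz => hs z (hsub hz)) hle 0 (by
        rw [mem_closedBall, dist_comm]; exact (mem_ball.1 hq).le)
      linarith
    have hδ4 : 0 < 4 / δ := by positivity
    have hne : ∀ q ∈ ball (0 : E) δ, g q ≠ 0 := fun q hq => norm_pos_iff.1 (hδ4.trans (hbig q hq))
    have hsub : ball (0 : E) δ ⊆ ball 0 (7 * δ) := ball_subset_ball (by linarith)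
    have hb := fderiv_bound (fun q => (g q)⁻¹) 0 δ (δ / 4) hδ ((hg.mono hsub).inv hne) (by
      intro q hq
      rw [norm_inv, inv_le_comm₀ (hδ4.trans (hbig q hq)) (by positivity), inv_div]
      exact (hbig q hq).le)
    have h00 : (0 : E) ∈ ball (0 : E) δ := mem_ball_self hδ
    have hd := (hg.differentiableAt (isOpen_ball.mem_nhds (hsub h00))).hasFDerivAt
    have hd2 := (hasDerivAt_inv (hne 0 h00)).comp_hasFDerivAt (0 : E) hd
    have hd3 : fderiv ℂ (fun q => (g q)⁻¹) 0 = -(g 0 ^ 2)⁻¹ • fderiv ℂ g 0 := hd2.fderiv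
    have hpos := norm_pos_iff.2 (hne 0 h00)
    rw [hd3, norm_smul, norm_neg, norm_inv, norm_pow] at hb
    unfold sphDeriv at h1
    rw [div_eq_one_iff_eq (by positivity)] at h1
    rw [h1, show 2 * (δ / 4) / δ = 1 / 2 by field_simp; norm_num, inv_mul_le_iff₀ (by positivity)] at hb
    nlinarith
  · intro k
    induction k with
    | zero =>
      intro A
      refine ⟨A, fun g _ _ h0 p hp => ?_⟩
      have : p = 0 := by simpa using hp
      rw [this]; exact h0
    | succ k ih =>
      intro A
      obtain ⟨B, hB⟩ := ih A
      obtain ⟨B', -, hB'⟩ := H B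
      refine ⟨B', fun g hg hs h0 p hp => ?_⟩
      have hp' : ‖p‖ ≤ (k + 1) * δ := by simpa using hp
      have hk : (0 : ℝ) < k + 1 := by positivity
      have hk0 : (0 : ℝ) ≤ k := by positivity
      set q : E := ((k / (k + 1) : ℝ) : ℂ) • p with hq
      have hqn : ‖q‖ ≤ k * δ := by
        rw [hq, norm_smul, Complex.norm_real, Real.norm_of_nonneg (by positivity)]
        calc (k / (k + 1) : ℝ) * ‖p‖ ≤ (k / (k + 1) : ℝ) * ((k + 1) * δ) := by gcongr
          _ = k * δ := by field_simp
      have hpq : p - q = ((1 / (k + 1) : ℝ) : ℂ) • p := by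
        have : ((1 / (k + 1) : ℝ) : ℂ) = 1 - ((k / (k + 1) : ℝ) : ℂ) := by
          rw [← Complex.ofReal_one, ← Complex.ofReal_sub]
          congr 1
          field_simp
          ring
        rw [this, sub_smul, one_smul]
      have hpqn : ‖p - q‖ ≤ δ := by
        rw [hpq, norm_smul, Complex.norm_real, Real.norm_of_nonneg (by positivity)]
        calc (1 / (k + 1) : ℝ) * ‖p‖ ≤ (1 / (k + 1) : ℝ) * ((k + 1) * δ) := by gcongr
          _ = δ := by field_simp
      push_cast at hg hs
      have hs1 : ball (0 : E) ((k + 7) * δ) ⊆ ball 0 ((k + 1 + 7) * δ) :=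
        ball_subset_ball (by nlinarith)
      have hs2 : ball q (6 * δ) ⊆ ball 0 ((k + 1 + 7) * δ) := by
        apply ball_subset_ball'
        rw [dist_zero_right]
        nlinarith
      have h1 := hB g (hg.mono hs1) (fun z hz => hs z (hs1 hz)) h0 q (by simpa using hqn)
      exact hB' g q (hg.mono hs2) (fun z hz => hs z (hs2 hz)) h1 p (by
        rw [mem_closedBall, dist_eq_norm]; exact hpqn)

/-- Zalcman's rescaling lemma in ℂⁿ. -/
theorem stmt14 {n : ℕ} {Ω : Set (Cn n)} (hΩ : IsOpen Ω) (hconn : IsConnected Ω)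
    (F : Set (Cn n → ℂ)) (hhol : ∀ f ∈ F, DifferentiableOn ℂ f Ω)
    (z₀ : Cn n) (hz₀ : z₀ ∈ Ω)
    (hnn : ¬ ∃ U : Set (Cn n), IsOpen U ∧ z₀ ∈ U ∧ U ⊆ Ω ∧ IsNormalFamily U F) :
    ∃ f : ℕ → Cn n → ℂ, ∃ z : ℕ → Cn n, ∃ ρ : ℕ → ℝ, ∃ g : Cn n → ℂ,
      (∀ j, f j ∈ F) ∧ (∀ j, z j ∈ Ω) ∧ Tendsto z atTop (nhds z₀) ∧
      (∀ j, 0 < ρ j) ∧ Tendsto ρ atTop (nhds 0) ∧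
      Differentiable ℂ g ∧ (¬ ∃ c : ℂ, ∀ ζ, g ζ = c) ∧
      (∀ K : Set (Cn n), IsCompact K → ∀ ε > 0, ∃ N, ∀ j ≥ N, ∀ ζ ∈ K,
        ‖f j (z j + (ρ j : ℂ) • ζ) - g ζ‖ < ε) ∧
      (∀ ζ, sphDeriv g ζ ≤ 1) ∧ sphDeriv g 0 = 1 := by
  obtain ⟨R₀, hR₀, hR₀Ω⟩ := Metric.isOpen_iff.1 hΩ z₀ hz₀
  obtain ⟨R, hR, hRΩ⟩ : ∃ R > 0, Metric.closedBall z₀ (2 * R) ⊆ Ω :=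
    ⟨R₀ / 4, by positivity, (Metric.closedBall_subset_ball (by linarith)).trans hR₀Ω⟩
  have hbig : ∀ r > 0, r ≤ R → ∀ M > 0, ∃ f ∈ F, ∃ w ∈ Metric.ball z₀ r, M < sphDeriv f w := by
    intro r hr hrR M hM
    by_contra hcon
    push Not at hcon
    have hsub : Metric.ball z₀ r ⊆ Ω :=
      (Metric.ball_subset_closedBall.trans (Metric.closedBall_subset_closedBall (by linarith))).trans hRΩ
    obtain ⟨δ, hδ, hδr, hN⟩ := marty_s14 F z₀ r M hr hM (fun f hf => (hhol f hf).mono hsub) hcon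
    exact hnn ⟨Metric.ball z₀ δ, Metric.isOpen_ball, Metric.mem_ball_self hδ,
      (Metric.ball_subset_ball hδr).trans hsub, hN⟩
  have hstep : ∀ j : ℕ, ∃ f ∈ F, ∃ z ∈ Metric.ball z₀ (R / (j + 1)), ∃ ρ : ℝ, 0 < ρ ∧ ρ ≤ R / (j + 1) ∧
      DifferentiableOn ℂ (fun ζ => f (z + (ρ : ℂ) • ζ)) (Metric.ball 0 (j + 1)) ∧
      sphDeriv (fun ζ => f (z + (ρ : ℂ) • ζ)) 0 = 1 ∧
      ∀ ζ ∈ Metric.ball (0 : Cn n) (j + 1), sphDeriv (fun ζ => f (z + (ρ : ℂ) • ζ)) ζ *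
        (((j : ℝ) + 1) / ((j : ℝ) + 1 + 1)) * (1 - ‖ζ‖ / ((j : ℝ) + 1)) ≤ 1 := by
    intro j
    have hj : (1 : ℝ) ≤ (j : ℝ) + 1 := by linarith [Nat.cast_nonneg (α := ℝ) j]
    have hj0 : (0 : ℝ) < (j : ℝ) + 1 := by linarith
    have hrj : R / ((j : ℝ) + 1) ≤ R := div_le_self hR.le hj
    have hr0 : 0 < R / ((j : ℝ) + 1) := by positivity
    obtain ⟨f, hf, w, hw, hfw⟩ := hbig (R / (j + 1) / 2) (by positivity) (by linarith)
      (4 * (j + 1) / (R / (j + 1))) (by positivity)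
    obtain ⟨z, hz, ρ, hρ, hρr, h1, h2, h3⟩ := zalcman_step f z₀ w (R / (j + 1)) (j + 1) hr0 hj
      ((hhol f hf).mono ((Metric.closedBall_subset_closedBall (by linarith)).trans hRΩ)) hw hfw.le
    exact ⟨f, hf, z, hz, ρ, hρ, hρr.trans (div_le_self hr0.le hj), h1, h2, h3⟩
  choose f hf z hz ρ hρ hρr hd h1 hle using hstep
  obtain ⟨δ, hδ, ⟨A, hA⟩, hchain⟩ := bound_zero (E := Cn n)
  let G : ℕ → Cn n → ℂ := fun j ζ => f j (z j + (ρ j : ℂ) • ζ)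
  have hG : ∀ T : ℝ, ∃ N : ℕ, ∀ j ≥ N, DifferentiableOn ℂ (G j) (Metric.ball 0 T) ∧
      ∀ ζ ∈ Metric.ball (0 : Cn n) T, sphDeriv (G j) ζ ≤ 4 := by
    intro T
    obtain ⟨N, hN⟩ := exists_nat_ge (2 * T)
    refine ⟨N, fun j hj => ?_⟩
    have hj' : (N : ℝ) ≤ j := by exact_mod_cast hj
    have hj0 : (0 : ℝ) < (j : ℝ) + 1 := by positivity
    rcases le_or_gt T 0 with hT | hT
    · rw [Metric.ball_eq_empty.2 hT]
      exact ⟨fun x hx => hx.elim, fun x hx => hx.elim⟩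
    have hsub : Metric.ball (0 : Cn n) T ⊆ Metric.ball 0 (j + 1) := Metric.ball_subset_ball (by linarith)
    refine ⟨(hd j).mono hsub, fun ζ hζ => ?_⟩
    have h2 := hle j ζ (hsub hζ)
    have hζ' : ‖ζ‖ < T := by simpa using hζ
    have h3 : (1 : ℝ) / 2 ≤ 1 - ‖ζ‖ / ((j : ℝ) + 1) := by
      have : ‖ζ‖ / ((j : ℝ) + 1) ≤ 1 / 2 := by
        rw [div_le_iff₀ hj0]; linarith
      linarith
    have h4 : (1 : ℝ) / 2 ≤ ((j : ℝ) + 1) / ((j : ℝ) + 1 + 1) := by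
      rw [div_le_div_iff₀ (by norm_num) (by linarith)]; linarith
    have h5 : 0 ≤ sphDeriv (G j) ζ := div_nonneg (norm_nonneg _) (by positivity)
    have h6 : sphDeriv (G j) ζ * (1 / 2) * (1 / 2) ≤ 1 := by
      refine le_trans ?_ h2
      show sphDeriv (G j) ζ * (1 / 2) * (1 / 2) ≤ sphDeriv (G j) ζ * _ * _
      gcongr
    linarith
  obtain ⟨φ, hφ, g, hg, hconv, hfd⟩ := montel Set.univ isOpen_univ G (by
    intro x _
    obtain ⟨k, hk⟩ := exists_nat_ge ((‖x‖ + 1) / δ)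
    rw [div_le_iff₀ hδ] at hk
    obtain ⟨B, hB⟩ := hchain k A
    obtain ⟨N, hN⟩ := hG ((k + 7) * δ)
    have hk0 : (0 : ℝ) ≤ k := by positivity
    have hs7 : Metric.ball (0 : Cn n) (7 * δ) ⊆ Metric.ball 0 ((k + 7) * δ) :=
      Metric.ball_subset_ball (by nlinarith)
    have hs1 : Metric.ball x 1 ⊆ Metric.closedBall (0 : Cn n) (k * δ) := by
      refine (Metric.ball_subset_ball' ?_).trans Metric.ball_subset_closedBall
      rw [dist_zero_right]; linarith
    have hs2 : Metric.closedBall (0 : Cn n) (k * δ) ⊆ Metric.ball 0 ((k + 7) * δ) :=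
      Metric.closedBall_subset_ball (by nlinarith)
    refine ⟨1, one_pos, B, N, fun j hj => ?_⟩
    obtain ⟨h2, h3⟩ := hN j hj
    exact ⟨h2.mono (hs1.trans hs2), fun y hy => hB (G j) h2 h3
      (hA (G j) (h2.mono hs7) (fun z hz => h3 z (hs7 hz)) (h1 j)) y (hs1 hy)⟩)
  have hR0 : Tendsto (fun j : ℕ => R / ((j : ℝ) + 1)) atTop (nhds 0) :=
    tendsto_const_nhds.div_atTop (tendsto_natCast_atTop_atTop.atTop_add tendsto_const_nhds)
  have hzt : Tendsto z atTop (nhds z₀) := by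
    rw [tendsto_iff_dist_tendsto_zero]
    exact squeeze_zero (fun _ => dist_nonneg) (fun j => (Metric.mem_ball.1 (hz j)).le) hR0
  have hρt : Tendsto ρ atTop (nhds 0) := squeeze_zero (fun j => (hρ j).le) hρr hR0
  have hpt : ∀ ζ, Tendsto (fun j => G (φ j) ζ) atTop (nhds (g ζ)) := by
    intro ζ
    rw [Metric.tendsto_atTop]
    intro ε hε
    obtain ⟨N, hN⟩ := hconv {ζ} (Set.subset_univ _) isCompact_singleton ε hε
    exact ⟨N, fun j hj => by rw [dist_eq_norm]; exact hN j hj ζ rfl⟩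
  have hsph : ∀ ζ, Tendsto (fun j => sphDeriv (G (φ j)) ζ) atTop (nhds (sphDeriv g ζ)) := by
    intro ζ
    unfold sphDeriv
    exact (hfd ζ (Set.mem_univ _)).norm.div (((hpt ζ).norm.pow 2).const_add 1) (by positivity)
  have hs0 : sphDeriv g 0 = 1 := by
    refine tendsto_nhds_unique (hsph 0) ?_
    have : (fun j => sphDeriv (G (φ j)) 0) = fun _ => 1 := funext fun j => h1 (φ j)
    rw [this]
    exact tendsto_const_nhds
  refine ⟨fun j => f (φ j), fun j => z (φ j), fun j => ρ (φ j), g, fun j => hf _, fun j => ?_,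
    hzt.comp hφ.tendsto_atTop, fun j => hρ _, hρt.comp hφ.tendsto_atTop,
    fun x => (hg x (Set.mem_univ x)).differentiableAt Filter.univ_mem, ?_,
    fun K hK => hconv K (Set.subset_univ _) hK, ?_, hs0⟩
  · refine hRΩ (Metric.ball_subset_closedBall (Metric.ball_subset_ball ?_ (hz (φ j))))
    have : R / ((φ j : ℝ) + 1) ≤ R := div_le_self hR.le (by linarith [Nat.cast_nonneg (α := ℝ) (φ j)])
    linarith
  · rintro ⟨c, hc⟩
    have : g = fun _ => c := funext hc
    rw [this] at hs0
    simp [sphDeriv] at hs0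
  · intro ζ
    have hm : Tendsto (fun j : ℕ => (φ j : ℝ) + 1) atTop atTop :=
      (tendsto_natCast_atTop_atTop.comp hφ.tendsto_atTop).atTop_add tendsto_const_nhds
    have ha : Tendsto (fun j : ℕ => ((φ j : ℝ) + 1) / ((φ j : ℝ) + 1 + 1)) atTop (nhds 1) := by
      have h2 : Tendsto (fun j : ℕ => 1 - 1 / ((φ j : ℝ) + 1 + 1)) atTop (nhds (1 - 0)) :=
        (tendsto_const_nhds.div_atTop (hm.atTop_add tendsto_const_nhds)).const_sub 1
      rw [sub_zero] at h2
      refine h2.congr fun j => ?_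
      have : (φ j : ℝ) + 1 + 1 ≠ 0 := by positivity
      field_simp
      ring
    have hb : Tendsto (fun j : ℕ => 1 - ‖ζ‖ / ((φ j : ℝ) + 1)) atTop (nhds (1 - 0)) :=
      (tendsto_const_nhds.div_atTop hm).const_sub 1
    have hl := ((hsph ζ).mul ha).mul hb
    rw [sub_zero, mul_one, mul_one] at hl
    refine le_of_tendsto hl ?_
    filter_upwards [hm.eventually_gt_atTop ‖ζ‖] with j hj
    exact hle (φ j) ζ (by simpa using hj)
end
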